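/- For every θ ∈ Θ_M°, the 4×4 Fisher information matrix I_θ with entries I_{θiθj}(θ) = ∫_ℝ (f_{θi}f_{θj}/f)(x;θ) dx is positive definite; in particular it is nonsingular. -/

import Mathlib

open MeasureTheory Filter

noncomputable section

def ThetaInt : Set (Fin 4 → ℝ) :=
  {θ | 0 < θ 1 ∧ θ 2 ∈ Set.Ioo (0:ℝ) 2 ∧ θ 3 ∈ Set.Ioo (-1:ℝ) 1}

/-- Cumulant (log characteristic function) of the continuous (M₀) parameterization,
with `θ = (μ, σ, α, β)`. -/
def psiM (θ : Fin 4 → ℝ) (t : ℝ) : ℂ :=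
  if θ 2 = 1 then
    ((-(|θ 1 * t|) : ℝ) : ℂ)
      - Complex.I * (((2 * θ 3 / Real.pi) * (θ 1 * t) * Real.log |θ 1 * t| : ℝ) : ℂ)
      + Complex.I * ((θ 0 * t : ℝ) : ℂ)
  else
    ((-(|θ 1 * t| ^ (θ 2)) : ℝ) : ℂ) *
        (1 + Complex.I * ((θ 3 * Real.sign t * Real.tan (Real.pi * θ 2 / 2)
            * (|θ 1 * t| ^ (1 - θ 2) - 1) : ℝ) : ℂ))
      + Complex.I * ((θ 0 * t : ℝ) : ℂ)

/-- Characteristic function of the (M₀) parameterization. -/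
def phiM (θ : Fin 4 → ℝ) (t : ℝ) : ℂ := Complex.exp (psiM θ t)

/-- Stable density in the (M₀) parameterization, via Fourier inversion. -/
def fM (θ : Fin 4 → ℝ) (x : ℝ) : ℝ :=
  (1 / (2 * Real.pi)) *
    (∫ t : ℝ, Complex.exp (-Complex.I * (t : ℂ) * (x : ℂ)) * phiM θ t).re

/-- Partial derivative of the density in parameter `i`. -/
def fP (i : Fin 4) (θ : Fin 4 → ℝ) (x : ℝ) : ℝ :=
  deriv (fun s => fM (Function.update θ i s) x) (θ i)

/-- Second partial derivative of the density in parameters `i`, `j`. -/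
def fPP (i j : Fin 4) (θ : Fin 4 → ℝ) (x : ℝ) : ℝ :=
  deriv (fun s => fP i (Function.update θ j s) x) (θ j)

/-- Derivative of the density in `x`. -/
def fX (θ : Fin 4 → ℝ) (x : ℝ) : ℝ := deriv (fun y => fM θ y) x

/-- Mixed derivative `∂²f/∂x∂θᵢ`. -/
def fPX (i : Fin 4) (θ : Fin 4 → ℝ) (x : ℝ) : ℝ := deriv (fun y => fP i θ y) x

/-- Score functions. -/
def ellP (i : Fin 4) (θ : Fin 4 → ℝ) (x : ℝ) : ℝ := fP i θ x / fM θ x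

/-- Derivative of the score in `x`. -/
def ellPX (i : Fin 4) (θ : Fin 4 → ℝ) (x : ℝ) : ℝ := deriv (fun y => ellP i θ y) x

/-- Derivative of the score `ℓ_{θᵢ}` in the parameter `θⱼ`. -/
def ellPP (i j : Fin 4) (θ : Fin 4 → ℝ) (x : ℝ) : ℝ :=
  deriv (fun s => ellP i (Function.update θ j s) x) (θ j)

/-- `h = O(r)` as `|x| → ∞`. -/
def IsBigOAtInfty (h r : ℝ → ℝ) : Prop :=
  ∃ c > 0, ∃ M > 0, ∀ x : ℝ, M ≤ |x| → |h x| ≤ c * r x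


/-- Fisher information matrix of the (M₀) stable family. -/
def FisherInfo (θ : Fin 4 → ℝ) : Matrix (Fin 4) (Fin 4) ℝ :=
  Matrix.of fun i j => ∫ x : ℝ, fP i θ x * fP j θ x / fM θ x

end

/-!
The quadratic form of `I_θ` at `v` is `∫ (∑ vᵢ f_{θi})² / f`. It is strictly positive because `f` is
positive, everything is continuous, and the `f_{θi}` are linearly independent: by uniqueness of
Fourier transforms, a vanishing combination of the `f_{θi}` forces the same combination of the
derivatives `∂ψ/∂θi` of the cumulant `ψ = log φ` to vanish on `(0, ∞)`.

The analytic content is that the integrals converge, which compares two tail bounds.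

* Below: since `|β| < 1`, the Lévy measure of the stable law has densities `c / |x|^(1+α)` with
  `c > 0` on both half-lines. Splitting off a finite part of the jumps exhibits the law as a
  convolution with a compound Poisson law, so `f` is at least a multiple of `(1 + |x|)^(-1-α)`.
* Above: `f_{θi}` is the Fourier transform of `φ ∂ψ/∂θi`, which is Hermitian and on `(0, ∞)` is
  `O(t^γ)`, together with its derivatives under `t d/dt`, for every `γ < min α 1`. Hence
  `f_{θi} = O(|x|^(-1-γ))`.

Taking `γ > α / 2` makes every product `f_{θi} f_{θj} / f` integrable.
-/

open scoped Real
open Set Topology ProbabilityTheory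
open Complex (I)

section CharFun

theorem exists_isProbabilityMeasure_charFun_eq_of_tendsto {P : ℕ → Measure ℝ}
    [∀ m, IsProbabilityMeasure (P m)] {φ : ℝ → ℂ} (hφ : ContinuousAt φ 0)
    (h : ∀ t, Tendsto (fun m ↦ charFun (P m) t) atTop (𝓝 (φ t))) :
    ∃ Q : Measure ℝ, IsProbabilityMeasure Q ∧ ∀ t, charFun Q t = φ t := by
  let P' : ℕ → ProbabilityMeasure ℝ := fun m ↦ ⟨P m, inferInstance⟩
  have htight : IsTightMeasureSet {((R : ProbabilityMeasure ℝ) : Measure ℝ) | R ∈ range P'} := by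
    convert isTightMeasureSet_of_tendsto_charFun hφ h using 1
    ext R
    exact ⟨fun ⟨_, ⟨m, hm⟩, hR⟩ ↦ ⟨m, by rw [← hR, ← hm]; rfl⟩,
      fun ⟨m, hm⟩ ↦ ⟨P' m, ⟨m, rfl⟩, hm⟩⟩
  obtain ⟨Q, -, hQ⟩ := (isCompact_closure_of_isTightMeasureSet htight).ultrafilter_le_nhds
    ((hyperfilter ℕ).map P') (.trans (by simp) (monotone_principal subset_closure))
  refine ⟨Q, inferInstance, fun t ↦ ?_⟩
  have hlim : Tendsto P' (hyperfilter ℕ : Filter ℕ) (𝓝 Q) := hQ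
  rw [ProbabilityMeasure.tendsto_iff_forall_integral_rclike_tendsto ℂ] at hlim
  have hφt := (h t).mono_left Nat.hyperfilter_le_atTop
  simp_rw [charFun_eq_integral_innerProbChar] at hφt ⊢
  exact tendsto_nhds_unique (hlim (BoundedContinuousFunction.innerProbChar t)) hφt

/-- The `n`-fold convolution power of a measure on `ℝ`, with `convPow ν 0 = δ₀`. -/
noncomputable def convPow (ν : Measure ℝ) : ℕ → Measure ℝ
  | 0 => Measure.dirac 0
  | n + 1 => ν.conv (convPow ν n)

instance isFiniteMeasure_convPow (ν : Measure ℝ) [IsFiniteMeasure ν] (n : ℕ) :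
    IsFiniteMeasure (convPow ν n) := by
  induction n <;> (unfold convPow; infer_instance)

theorem charFun_convPow (ν : Measure ℝ) [IsFiniteMeasure ν] (n : ℕ) (t : ℝ) :
    charFun (convPow ν n) t = charFun ν t ^ n := by
  induction n with
  | zero => simp [convPow]
  | succ n ih => rw [convPow, charFun_conv, ih, pow_succ']

theorem measureReal_univ_convPow (ν : Measure ℝ) [IsFiniteMeasure ν] (n : ℕ) :
    (convPow ν n).real univ = ν.real univ ^ n := by
  have h := charFun_convPow ν n 0
  simp only [charFun_zero] at h
  exact_mod_cast h

/-- The compound Poisson distribution with finite jump measure `ν`: the mixture of the convolution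
powers of `ν` with the weights `exp (-ν(ℝ)) / n!`. -/
noncomputable def compoundPoisson (ν : Measure ℝ) : Measure ℝ :=
  Measure.sum fun n ↦ ENNReal.ofReal (Real.exp (-ν.real univ) * (n.factorial : ℝ)⁻¹) • convPow ν n

instance isProbabilityMeasure_compoundPoisson (ν : Measure ℝ) [IsFiniteMeasure ν] :
    IsProbabilityMeasure (compoundPoisson ν) := by
  have hsum : HasSum
      (fun n ↦ Real.exp (-ν.real univ) * (n.factorial : ℝ)⁻¹ * ν.real univ ^ n) 1 := by
    have h := (NormedSpace.expSeries_div_hasSum_exp (𝔸 := ℝ) (ν.real univ)).mul_left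
      (Real.exp (-ν.real univ))
    rw [← Real.exp_eq_exp_ℝ, ← Real.exp_add, neg_add_cancel, Real.exp_zero] at h
    refine h.congr_fun fun n ↦ ?_
    ring
  have hmass (n : ℕ) : (ENNReal.ofReal (Real.exp (-ν.real univ) * (n.factorial : ℝ)⁻¹)
      • convPow ν n) univ
        = ENNReal.ofReal (Real.exp (-ν.real univ) * (n.factorial : ℝ)⁻¹ * ν.real univ ^ n) := by
    rw [ENNReal.ofReal_mul (p := _ * _) (by positivity), ← measureReal_univ_convPow,
      ofReal_measureReal, Measure.smul_apply, smul_eq_mul]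
  constructor
  rw [compoundPoisson, Measure.sum_apply _ MeasurableSet.univ]
  simp_rw [hmass]
  rw [← ENNReal.ofReal_tsum_of_nonneg (fun n ↦ by positivity) hsum.summable, hsum.tsum_eq,
    ENNReal.ofReal_one]

theorem integrable_cexp_mul_I (ν : Measure ℝ) [IsFiniteMeasure ν] (t : ℝ) :
    Integrable (fun x : ℝ ↦ Complex.exp (t * x * I)) ν := by
  refine .of_bound (C := 1) (by fun_prop) (.of_forall fun x ↦ ?_)
  rw [← Complex.ofReal_mul, Complex.norm_exp_ofReal_mul_I]

theorem charFun_compoundPoisson (ν : Measure ℝ) [IsFiniteMeasure ν] (t : ℝ) :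
    charFun (compoundPoisson ν) t = Complex.exp (charFun ν t - charFun ν 0) := by
  have hint := integrable_cexp_mul_I (compoundPoisson ν) t
  rw [charFun_apply_real]
  refine (hasSum_integral_measure hint).unique ?_
  have hexp := (NormedSpace.expSeries_div_hasSum_exp (𝔸 := ℂ) (charFun ν t)).mul_left
    (Complex.exp (-charFun ν 0))
  rw [← Complex.exp_eq_exp_ℂ, ← Complex.exp_add, neg_add_eq_sub] at hexp
  refine hexp.congr_fun fun n ↦ ?_
  rw [integral_smul_measure, ← charFun_apply_real, charFun_convPow,
    ENNReal.toReal_ofReal (by positivity), charFun_zero, Complex.real_smul]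
  push_cast
  ring

theorem smul_le_compoundPoisson (ν : Measure ℝ) [SFinite ν] :
    ENNReal.ofReal (Real.exp (-ν.real univ)) • ν ≤ compoundPoisson ν := by
  refine le_trans (le_of_eq ?_) (Measure.le_sum _ 1)
  simp [convPow]

end CharFun

section LevyKhintchine

/-- The compensated exponential `x ↦ exp (w x) - 1 - w x 1_{|x| ≤ 1}` of the Lévy–Khintchine
formula. The usual kernel is the case `w = i t`; real `w` gives Laplace exponents. -/
noncomputable def levyKernel (w : ℂ) (x : ℝ) : ℂ :=
  Complex.exp (w * x) - 1 - w * ((Icc (-1 : ℝ) 1).indicator id x : ℝ)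

@[fun_prop]
theorem measurable_levyKernel (w : ℂ) : Measurable (levyKernel w) := by
  have h : Measurable ((Icc (-1 : ℝ) 1).indicator (id : ℝ → ℝ)) :=
    measurable_id.indicator measurableSet_Icc
  unfold levyKernel
  fun_prop

theorem continuous_levyKernel_left (x : ℝ) : Continuous fun w ↦ levyKernel w x := by
  unfold levyKernel
  fun_prop

@[simp]
theorem levyKernel_zero_left (x : ℝ) : levyKernel 0 x = 0 := by simp [levyKernel]

@[simp]
theorem levyKernel_zero_right (w : ℂ) : levyKernel w 0 = 0 := by simp [levyKernel]

theorem levyKernel_neg_right (w : ℂ) (x : ℝ) : levyKernel w (-x) = levyKernel (-w) x := by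
  by_cases hx : x ∈ Icc (-1 : ℝ) 1
  · have hx' : -x ∈ Icc (-1 : ℝ) 1 := ⟨by linarith [hx.2], by linarith [hx.1]⟩
    simp [levyKernel, hx, hx']
  · have hx' : -x ∉ Icc (-1 : ℝ) 1 := fun h ↦ hx ⟨by linarith [h.2], by linarith [h.1]⟩
    simp [levyKernel, hx, hx']

theorem norm_cexp_sub_one_le_two {z : ℂ} (hz : z.re ≤ 0) : ‖Complex.exp z - 1‖ ≤ 2 := by
  calc ‖Complex.exp z - 1‖ ≤ ‖Complex.exp z‖ + ‖(1 : ℂ)‖ := norm_sub_le _ _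
    _ ≤ 1 + 1 := by
      rw [norm_one, Complex.norm_exp]
      gcongr
      exact Real.exp_le_one_iff.2 hz
    _ = 2 := by norm_num

theorem norm_cexp_sub_one_sub_le {z : ℂ} (hz : z.re ≤ 0) :
    ‖Complex.exp z - 1 - z‖ ≤ 3 * ‖z‖ ^ 2 := by
  rcases le_or_gt ‖z‖ 1 with h | h
  · exact (Complex.norm_exp_sub_one_sub_id_le h).trans (by nlinarith [sq_nonneg ‖z‖])
  · calc ‖Complex.exp z - 1 - z‖ ≤ 2 + ‖z‖ :=
          (norm_sub_le _ _).trans (by gcongr; exact norm_cexp_sub_one_le_two hz)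
      _ ≤ 3 * ‖z‖ ^ 2 := by nlinarith

theorem norm_levyKernel_le {w : ℂ} {x : ℝ} (h : (w * x).re ≤ 0) :
    ‖levyKernel w x‖ ≤ (2 + 3 * ‖w‖ ^ 2) * min 1 (x ^ 2) := by
  by_cases hx : x ∈ Icc (-1 : ℝ) 1
  · have hx2 : x ^ 2 ≤ 1 := by nlinarith [hx.1, hx.2]
    have hK := norm_cexp_sub_one_sub_le h
    simp only [levyKernel, indicator_of_mem hx, id, min_eq_right hx2]
    rw [norm_mul, Complex.norm_real, mul_pow, Real.norm_eq_abs, sq_abs] at hK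
    nlinarith [sq_nonneg x]
  · have hx2 : 1 ≤ x ^ 2 := by
      rw [← sq_abs]
      exact one_le_pow₀ (by_contra fun h ↦ hx (abs_le.1 (not_le.1 h).le))
    have hK := norm_cexp_sub_one_le_two h
    simp only [levyKernel, indicator_of_notMem hx, Complex.ofReal_zero, mul_zero, sub_zero,
      min_eq_left hx2]
    nlinarith [sq_nonneg ‖w‖]

theorem norm_levyKernel_I_le (t x : ℝ) :
    ‖levyKernel (t * I) x‖ ≤ (2 + 3 * t ^ 2) * min 1 (x ^ 2) := by
  simpa using norm_levyKernel_le (w := t * I) (x := x) (by simp)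

variable {Λ : Measure ℝ}

theorem integrable_levyKernel (hΛ : Integrable (fun x : ℝ ↦ min 1 (x ^ 2)) Λ) (t : ℝ) :
    Integrable (levyKernel (t * I)) Λ :=
  (hΛ.const_mul _).mono' (by fun_prop) (.of_forall fun x ↦ norm_levyKernel_I_le t x)

theorem continuousAt_integral_levyKernel (hΛ : Integrable (fun x : ℝ ↦ min 1 (x ^ 2)) Λ) :
    ContinuousAt (fun t : ℝ ↦ ∫ x, levyKernel (t * I) x ∂Λ) 0 := by
  refine continuousAt_of_dominated (bound := fun x ↦ (2 + 3 * 1 ^ 2) * min 1 (x ^ 2))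
    (.of_forall fun t ↦ by fun_prop) ?_ (hΛ.const_mul _) (.of_forall fun x ↦ ?_)
  · filter_upwards [Metric.ball_mem_nhds (0 : ℝ) one_pos] with t ht
    have ht2 : t ^ 2 ≤ 1 ^ 2 := sq_le_sq.2 (by simpa using (mem_ball_zero_iff.1 ht).le)
    refine .of_forall fun x ↦ (norm_levyKernel_I_le t x).trans ?_
    gcongr
  · exact ((continuous_levyKernel_left x).comp (by fun_prop)).continuousAt

theorem integrable_id_indicator_Icc (ν : Measure ℝ) [IsFiniteMeasure ν] :
    Integrable ((Icc (-1 : ℝ) 1).indicator id) ν := by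
  refine .of_bound (C := 1) (measurable_id.indicator measurableSet_Icc).aestronglyMeasurable
    (.of_forall fun x ↦ ?_)
  by_cases hx : x ∈ Icc (-1 : ℝ) 1
  · simpa [indicator_of_mem hx] using abs_le.2 hx
  · simp [hx]

theorem integral_levyKernel_eq (ν : Measure ℝ) [IsFiniteMeasure ν] (t : ℝ) :
    ∫ x, levyKernel (t * I) x ∂ν
      = charFun ν t - charFun ν 0 - t * I * ∫ x, (Icc (-1 : ℝ) 1).indicator id x ∂ν := by
  have hexp : Integrable (fun x : ℝ ↦ Complex.exp (t * x * I) - 1) ν :=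
    (integrable_cexp_mul_I ν t).sub (integrable_const 1)
  have hid : Integrable (fun x : ℝ ↦ t * I * (((Icc (-1 : ℝ) 1).indicator id x : ℝ) : ℂ)) ν :=
    (integrable_id_indicator_Icc ν).ofReal.const_mul _
  calc ∫ x, levyKernel (t * I) x ∂ν
      = ∫ x, (Complex.exp (t * x * I) - 1
          - t * I * (((Icc (-1 : ℝ) 1).indicator id x : ℝ) : ℂ)) ∂ν := by
        simp only [levyKernel, mul_right_comm]
    _ = _ := by
        rw [integral_sub hexp hid, integral_sub (integrable_cexp_mul_I ν t) (integrable_const 1),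
          integral_const_mul, integral_complex_ofReal, charFun_apply_real, charFun_zero]
        simp

theorem exists_charFun_eq_exp_integral_levyKernel_of_isFiniteMeasure (ν : Measure ℝ)
    [IsFiniteMeasure ν] (b : ℝ) :
    ∃ P : Measure ℝ, IsProbabilityMeasure P ∧
      ∀ t : ℝ, charFun P t = Complex.exp (∫ x, levyKernel (t * I) x ∂ν + b * t * I) := by
  refine ⟨compoundPoisson ν ∗
    Measure.dirac (b - ∫ x, (Icc (-1 : ℝ) 1).indicator id x ∂ν), inferInstance, fun t ↦ ?_⟩
  rw [charFun_conv, charFun_compoundPoisson, charFun_dirac, ← Complex.exp_add,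
    integral_levyKernel_eq]
  congr 1
  simp only [RCLike.inner_apply, conj_trivial]
  push_cast
  ring

theorem isFiniteMeasure_restrict_of_integrable_min_one_sq
    (hΛ : Integrable (fun x : ℝ ↦ min 1 (x ^ 2)) Λ) {ε : ℝ} (hε : 0 < ε) :
    IsFiniteMeasure (Λ.restrict {x | ε ≤ min 1 (x ^ 2)}) :=
  ⟨by simpa using (hΛ.measure_ge_lt_top hε)⟩

theorem tendsto_setIntegral_levyKernel (hΛ : Integrable (fun x : ℝ ↦ min 1 (x ^ 2)) Λ) (t : ℝ) :
    Tendsto (fun m : ℕ ↦ ∫ x in {x | 1 / ((m : ℝ) + 1) ≤ min 1 (x ^ 2)}, levyKernel (t * I) x ∂Λ)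
      atTop (𝓝 (∫ x, levyKernel (t * I) x ∂Λ)) := by
  have hmeas (m : ℕ) : MeasurableSet {x : ℝ | 1 / ((m : ℝ) + 1) ≤ min 1 (x ^ 2)} :=
    measurableSet_le (by fun_prop) (by fun_prop)
  simp_rw [← integral_indicator (hmeas _)]
  refine tendsto_integral_of_dominated_convergence (fun x ↦ ‖levyKernel (t * I) x‖)
    (fun m ↦ ((measurable_levyKernel _).indicator (hmeas m)).aestronglyMeasurable)
    (integrable_levyKernel hΛ t).norm
    (fun m ↦ .of_forall fun x ↦ norm_indicator_le_norm_self _ _) (.of_forall fun x ↦ ?_)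
  rcases eq_or_ne x 0 with rfl | hx
  · simp [indicator_apply]
  · have hpos : (0 : ℝ) < min 1 (x ^ 2) := by positivity
    refine tendsto_const_nhds.congr' ?_
    filter_upwards [tendsto_one_div_add_atTop_nhds_zero_nat.eventually_le_const hpos] with m hm
    exact (indicator_of_mem (s := {x : ℝ | 1 / ((m : ℝ) + 1) ≤ min 1 (x ^ 2)}) hm _).symm

theorem exists_charFun_eq_exp_integral_levyKernel
    (hΛ : Integrable (fun x : ℝ ↦ min 1 (x ^ 2)) Λ) (b : ℝ) :
    ∃ P : Measure ℝ, IsProbabilityMeasure P ∧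
      ∀ t : ℝ, charFun P t = Complex.exp (∫ x, levyKernel (t * I) x ∂Λ + b * t * I) := by
  let Λ' (m : ℕ) : Measure ℝ := Λ.restrict {x | 1 / ((m : ℝ) + 1) ≤ min 1 (x ^ 2)}
  have hΛ' (m : ℕ) : IsFiniteMeasure (Λ' m) :=
    isFiniteMeasure_restrict_of_integrable_min_one_sq hΛ (by positivity)
  choose P hP hchar using fun m ↦
    exists_charFun_eq_exp_integral_levyKernel_of_isFiniteMeasure (Λ' m) b
  refine exists_isProbabilityMeasure_charFun_eq_of_tendsto (P := P) ?_ fun t ↦ ?_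
  · exact ((continuousAt_integral_levyKernel hΛ).add (by fun_prop)).cexp
  · simp_rw [hchar]
    exact ((tendsto_setIntegral_levyKernel hΛ t).add_const _).cexp

theorem exists_smul_conv_le_of_le {ν : Measure ℝ} [IsFiniteMeasure ν]
    (hΛ : Integrable (fun x : ℝ ↦ min 1 (x ^ 2)) Λ) (hν : ν ≤ Λ) (b : ℝ) :
    ∃ P : Measure ℝ, IsProbabilityMeasure P ∧
      (∀ t : ℝ, charFun P t = Complex.exp (∫ x, levyKernel (t * I) x ∂Λ + b * t * I)) ∧
      ∃ G : Measure ℝ, IsProbabilityMeasure G ∧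
        ENNReal.ofReal (Real.exp (-ν.real univ)) • (G ∗ ν) ≤ P := by
  have hsub : Integrable (fun x : ℝ ↦ min 1 (x ^ 2)) (Λ - ν) := hΛ.mono_measure Measure.sub_le
  obtain ⟨G, hG, hGchar⟩ := exists_charFun_eq_exp_integral_levyKernel hsub
    (b - ∫ x, (Icc (-1 : ℝ) 1).indicator id x ∂ν)
  -- Splitting off the finite part `ν` of the jumps makes the law a convolution.
  refine ⟨G ∗ compoundPoisson ν, inferInstance, fun t ↦ ?_, G, hG, ?_⟩
  · have hsplit : ∫ x, levyKernel (t * I) x ∂Λ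
        = ∫ x, levyKernel (t * I) x ∂(Λ - ν) + ∫ x, levyKernel (t * I) x ∂ν := by
      rw [← integral_add_measure (integrable_levyKernel hsub t)
        ((integrable_levyKernel hΛ t).mono_measure hν), Measure.sub_add_cancel_of_le hν]
    rw [charFun_conv, hGchar, charFun_compoundPoisson, ← Complex.exp_add, hsplit,
      integral_levyKernel_eq ν]
    congr 1
    push_cast
    ring
  · rw [← Measure.conv_smul_right]
    exact Measure.map_mono (Measure.prod_mono le_rfl (smul_le_compoundPoisson ν)) (by fun_prop)

end LevyKhintchine

section StableExponent

variable {α : ℝ}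

theorem integrableOn_rpow_mul_min_one_sq (hα : α ∈ Ioo 0 2) :
    IntegrableOn (fun x : ℝ ↦ x ^ (-1 - α) * min 1 (x ^ 2)) (Ioi 0) := by
  rw [← Ioc_union_Ioi_eq_Ioi zero_le_one]
  refine IntegrableOn.union ?_ ?_
  · have h : IntegrableOn (fun x : ℝ ↦ x ^ (1 - α)) (Ioc 0 1) :=
      (intervalIntegrable_iff_integrableOn_Ioc_of_le zero_le_one).1
        (intervalIntegral.intervalIntegrable_rpow' (by linarith [hα.2]))
    refine h.congr_fun (fun x hx ↦ ?_) measurableSet_Ioc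
    dsimp only
    rw [min_eq_right (pow_le_one₀ hx.1.le hx.2), ← Real.rpow_add_natCast hx.1.ne']
    norm_num
    ring_nf
  · have h : IntegrableOn (fun x : ℝ ↦ x ^ (-1 - α)) (Ioi 1) :=
      integrableOn_Ioi_rpow_of_lt (by linarith [hα.1]) one_pos
    refine h.congr_fun (fun x hx ↦ ?_) measurableSet_Ioi
    dsimp only
    rw [min_eq_left (one_le_pow₀ (le_of_lt hx)), mul_one]

/-- The Laplace exponent `w ↦ ∫₀^∞ (exp (w x) - 1 - w x 1_{x ≤ 1}) x^(-1-α) dx` of the totally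
skewed `α`-stable law, on the closed left half-plane. -/
noncomputable def stableExponent (α : ℝ) (w : ℂ) : ℂ :=
  ∫ x in Ioi (0 : ℝ), ((x ^ (-1 - α) : ℝ) : ℂ) * levyKernel w x

theorem stableExponent_zero_right (α : ℝ) : stableExponent α 0 = 0 := by simp [stableExponent]

theorem conj_stableExponent (α : ℝ) (w : ℂ) :
    (starRingEnd ℂ) (stableExponent α w) = stableExponent α ((starRingEnd ℂ) w) := by
  simp only [stableExponent, ← integral_conj, levyKernel, map_mul, map_sub, Complex.conj_ofReal,
    map_one, ← Complex.exp_conj]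

theorem norm_rpow_mul_levyKernel_le {w : ℂ} (hw : w.re ≤ 0) {x : ℝ} (hx : 0 < x) :
    ‖((x ^ (-1 - α) : ℝ) : ℂ) * levyKernel w x‖
      ≤ (2 + 3 * ‖w‖ ^ 2) * (x ^ (-1 - α) * min 1 (x ^ 2)) := by
  rw [norm_mul, Complex.norm_real, Real.norm_of_nonneg (by positivity), mul_left_comm]
  gcongr
  refine norm_levyKernel_le ?_
  rw [Complex.re_mul_ofReal]
  exact mul_nonpos_of_nonpos_of_nonneg hw hx.le

theorem integrableOn_rpow_mul_levyKernel (hα : α ∈ Ioo 0 2) {w : ℂ} (hw : w.re ≤ 0) :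
    IntegrableOn (fun x : ℝ ↦ ((x ^ (-1 - α) : ℝ) : ℂ) * levyKernel w x) (Ioi 0) :=
  ((integrableOn_rpow_mul_min_one_sq hα).const_mul _).mono' (by fun_prop)
    ((ae_restrict_mem measurableSet_Ioi).mono fun _ hx ↦ norm_rpow_mul_levyKernel_le hw hx)

theorem norm_rpow_mul_levyKernel_le_of_mem_ball {w w₀ : ℂ} (hw : w.re ≤ 0)
    (hw₀ : w ∈ Metric.ball w₀ 1) {x : ℝ} (hx : 0 < x) :
    ‖((x ^ (-1 - α) : ℝ) : ℂ) * levyKernel w x‖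
      ≤ (2 + 3 * (‖w₀‖ + 1) ^ 2) * (x ^ (-1 - α) * min 1 (x ^ 2)) := by
  have hnorm : ‖w‖ ≤ ‖w₀‖ + 1 :=
    (norm_le_norm_add_norm_sub' w w₀).trans (by gcongr; exact (mem_ball_iff_norm.1 hw₀).le)
  refine (norm_rpow_mul_levyKernel_le hw hx).trans ?_
  gcongr

theorem continuousOn_stableExponent (hα : α ∈ Ioo 0 2) :
    ContinuousOn (stableExponent α) {w | w.re ≤ 0} := fun w₀ _ ↦ by
  refine continuousWithinAt_of_dominated (.of_forall fun w ↦ by fun_prop) ?_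
    ((integrableOn_rpow_mul_min_one_sq hα).const_mul (2 + 3 * (‖w₀‖ + 1) ^ 2))
    (.of_forall fun x ↦ ((continuous_levyKernel_left x).const_mul _).continuousWithinAt)
  filter_upwards [self_mem_nhdsWithin,
    mem_nhdsWithin_of_mem_nhds (Metric.ball_mem_nhds w₀ one_pos)] with w hw hball
  exact (ae_restrict_mem measurableSet_Ioi).mono fun x hx ↦
    norm_rpow_mul_levyKernel_le_of_mem_ball hw hball hx

theorem hasDerivAt_levyKernel (w : ℂ) (x : ℝ) :
    HasDerivAt (fun w ↦ levyKernel w x)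
      (Complex.exp (w * x) * x - ((Icc (-1 : ℝ) 1).indicator id x : ℝ)) w := by
  have hlin (c : ℂ) : HasDerivAt (fun w ↦ w * c) c w := by
    simpa using (hasDerivAt_id w).mul_const c
  exact ((hlin x).cexp.sub_const 1).sub (hlin _)

theorem differentiableOn_stableExponent (hα : α ∈ Ioo 0 2) :
    DifferentiableOn ℂ (stableExponent α) {w | w.re < 0} := fun w₀ hw₀ ↦ by
  obtain ⟨r, hr, hsub⟩ := Metric.isOpen_iff.1 ((Complex.isOpen_re_lt 0).inter Metric.isOpen_ball) w₀
    ⟨hw₀, Metric.mem_ball_self one_pos⟩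
  have hmeas : Measurable fun x : ℝ ↦ (((x ^ (-1 - α) : ℝ) : ℂ) *
      (Complex.exp (w₀ * x) * x - ((Icc (-1 : ℝ) 1).indicator id x : ℝ))) := by
    have h : Measurable ((Icc (-1 : ℝ) 1).indicator (id : ℝ → ℝ)) :=
      measurable_id.indicator measurableSet_Icc
    fun_prop
  refine (hasDerivAt_integral_of_dominated_loc_of_deriv_le
    (F := fun w x ↦ ((x ^ (-1 - α) : ℝ) : ℂ) * levyKernel w x)
    (bound := fun x ↦ (2 + 3 * (‖w₀‖ + 1) ^ 2) * (x ^ (-1 - α) * min 1 (x ^ 2)) / (r / 2))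
    (Metric.ball_mem_nhds w₀ (half_pos hr)) (.of_forall fun w ↦ by fun_prop)
    (integrableOn_rpow_mul_levyKernel hα (le_of_lt hw₀)) hmeas.aestronglyMeasurable ?_
    (((integrableOn_rpow_mul_min_one_sq hα).const_mul _).div_const _)
    (.of_forall fun x w _ ↦ (hasDerivAt_levyKernel w x).const_mul _)).2
      |>.differentiableAt.differentiableWithinAt
  refine (ae_restrict_mem measurableSet_Ioi).mono fun x hx w hw ↦ ?_
  have hderiv (w : ℂ) := (hasDerivAt_levyKernel w x).const_mul ((x ^ (-1 - α) : ℝ) : ℂ)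
  -- Cauchy's estimate turns the bound for the kernel into a bound for its derivative.
  rw [← (hderiv w).deriv]
  refine Complex.norm_deriv_le_of_forall_mem_sphere_norm_le (half_pos hr)
    (Differentiable.diffContOnCl fun w ↦ (hderiv w).differentiableAt) fun w' hw' ↦ ?_
  have hmem : w' ∈ Metric.ball w₀ r := by
    rw [Metric.mem_ball] at hw ⊢
    rw [Metric.mem_sphere] at hw'
    linarith [dist_triangle w' w w₀]
  exact norm_rpow_mul_levyKernel_le_of_mem_ball (le_of_lt (hsub hmem).1) (hsub hmem).2 hx

theorem levyKernel_neg_one_mul {r x : ℝ} (hr : 0 < r) (hx : 0 < x) :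
    levyKernel (-1) (r * x) = levyKernel (-r) x
      + r * x * (((Ioc 1 r⁻¹).indicator 1 x - (Ioc r⁻¹ 1).indicator 1 x : ℝ) : ℂ) := by
  have hrx : r * x ≤ 1 ↔ x ≤ r⁻¹ := by rw [inv_eq_one_div, le_div_iff₀' hr]
  have hpos : 0 < r * x := mul_pos hr hx
  have h1 : r * x ∈ Icc (-1) 1 ↔ x ≤ r⁻¹ := ⟨fun h ↦ hrx.1 h.2, fun h ↦ ⟨by linarith, hrx.2 h⟩⟩
  have h2 : x ∈ Icc (-1) 1 ↔ x ≤ 1 := ⟨fun h ↦ h.2, fun h ↦ ⟨by linarith, h⟩⟩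
  simp only [levyKernel, indicator_apply, h1, h2, mem_Ioc, ← not_le, id, Pi.one_apply]
  by_cases h : x ≤ r⁻¹ <;> by_cases h' : x ≤ 1 <;>
    simp only [h, h', not_true, not_false_iff, and_true, and_false, if_true, if_false] <;>
    push_cast <;> ring_nf

theorem setIntegral_indicator_sub_indicator_mul {f : ℝ → ℝ} {a b : ℝ} (ha : 0 < a) (hb : 0 < b)
    (hf : ContinuousOn f (Ioi 0)) :
    IntegrableOn (fun x ↦ ((Ioc a b).indicator 1 x - (Ioc b a).indicator 1 x) * f x) (Ioi 0) ∧
      ∫ x in Ioi 0, ((Ioc a b).indicator 1 x - (Ioc b a).indicator 1 x) * f x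
        = ∫ x in a..b, f x := by
  have hsub {a b : ℝ} (ha : 0 < a) : Ioc a b ∩ Ioi 0 = Ioc a b :=
    inter_eq_left.2 fun x hx ↦ ha.trans hx.1
  have hint {a b : ℝ} (ha : 0 < a) :
      Integrable ((Ioc a b).indicator f) (volume.restrict (Ioi 0)) := by
    rw [integrable_indicator_iff measurableSet_Ioc, IntegrableOn,
      Measure.restrict_restrict measurableSet_Ioc, hsub ha]
    exact (hf.mono fun x hx ↦ ha.trans_le hx.1).integrableOn_Icc.mono_set Ioc_subset_Icc_self
  have heq : (fun x ↦ ((Ioc a b).indicator 1 x - (Ioc b a).indicator 1 x) * f x)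
      = fun x ↦ (Ioc a b).indicator f x - (Ioc b a).indicator f x := by
    ext x
    rw [sub_mul, ← indicator_mul_left, ← indicator_mul_left]
    simp only [Pi.one_apply, one_mul]
  rw [heq]
  refine ⟨(hint ha).sub (hint hb), ?_⟩
  rw [integral_sub (hint ha) (hint hb), integral_indicator measurableSet_Ioc,
    integral_indicator measurableSet_Ioc, Measure.restrict_restrict measurableSet_Ioc,
    Measure.restrict_restrict measurableSet_Ioc, hsub ha, hsub hb, intervalIntegral]

-- The substitution `y = r x` only moves the truncation point of the compensator.
theorem stableExponent_neg_ofReal (hα : α ∈ Ioo 0 2) {r : ℝ} (hr : 0 < r) :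
    stableExponent α (-r)
      = (r ^ α : ℝ) * stableExponent α (-1) - r * ((∫ x in (1 : ℝ)..r⁻¹, x ^ (-α) : ℝ) : ℂ) := by
  obtain ⟨hint, hval⟩ := setIntegral_indicator_sub_indicator_mul (f := fun x ↦ x ^ (-α)) one_pos
    (inv_pos.2 hr) (continuousOn_id.rpow_const fun x hx ↦ .inl (ne_of_gt hx))
  have hpow {x : ℝ} (hx : 0 < x) : r ^ α * r * (r * x) ^ (-1 - α) = x ^ (-1 - α) := by
    rw [Real.mul_rpow hr.le hx.le, ← mul_assoc, ← Real.rpow_add_one hr.ne', ← Real.rpow_add hr,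
      show α + 1 + (-1 - α) = 0 by ring, Real.rpow_zero, one_mul]
  have hscale : ∀ x ∈ Ioi (0 : ℝ), (r ^ α * r : ℝ) *
      (((r * x) ^ (-1 - α) : ℝ) * levyKernel (-1) (r * x))
        = (x ^ (-1 - α) : ℝ) * levyKernel (-r) x + r *
          ((((Ioc 1 r⁻¹).indicator 1 x - (Ioc r⁻¹ 1).indicator 1 x) * x ^ (-α) : ℝ) : ℂ) := by
    intro x hx
    have hx' : x ^ (-1 - α) * x = x ^ (-α) := by
      rw [← Real.rpow_add_one (ne_of_gt hx), show -1 - α + 1 = -α by ring]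
    rw [← mul_assoc, ← Complex.ofReal_mul, hpow hx, levyKernel_neg_one_mul hr hx, ← hx']
    push_cast
    ring
  have hchange : (r ^ α : ℝ) * stableExponent α (-1)
      = ∫ x in Ioi (0 : ℝ), (r ^ α * r : ℝ) *
          (((r * x) ^ (-1 - α) : ℝ) * levyKernel (-1) (r * x)) := by
    rw [integral_const_mul, stableExponent, ← mul_zero r,
      ← integral_comp_mul_left_Ioi' (fun y ↦ ((y ^ (-1 - α) : ℝ) : ℂ) * levyKernel (-1) y) 0 hr,
      Complex.real_smul, mul_zero]
    push_cast
    ring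
  rw [hchange, setIntegral_congr_fun measurableSet_Ioi hscale, eq_sub_iff_add_eq, ← hval]
  refine Eq.symm ((integral_add (integrableOn_rpow_mul_levyKernel hα (by simpa using hr.le))
    (hint.ofReal.const_mul _)).trans ?_)
  rw [integral_const_mul, integral_ofReal]
  rfl

theorem eqOn_of_eq_neg_ofReal {f g : ℂ → ℂ} (hf : DifferentiableOn ℂ f {w | w.re < 0})
    (hg : DifferentiableOn ℂ g {w | w.re < 0}) (hf' : ContinuousOn f {w | w.re ≤ 0 ∧ w ≠ 0})
    (hg' : ContinuousOn g {w | w.re ≤ 0 ∧ w ≠ 0}) (h : ∀ r : ℝ, 0 < r → f (-r) = g (-r)) :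
    EqOn f g {w | w.re ≤ 0 ∧ w ≠ 0} := by
  have hinterior : EqOn f g {w | w.re < 0} := by
    refine (hf.analyticOnNhd (Complex.isOpen_re_lt 0)).eqOn_of_preconnected_of_frequently_eq
      (hg.analyticOnNhd (Complex.isOpen_re_lt 0)) (convex_halfSpace_re_lt 0).isPreconnected
      (z₀ := -1) (by simp) ?_
    have hlim : Tendsto (fun r : ℝ ↦ -(r : ℂ)) (𝓝[≠] 1) (𝓝[≠] (-1)) :=
      tendsto_nhdsWithin_iff.2
        ⟨(Continuous.tendsto' (by fun_prop) _ _ (by simp)).mono_left nhdsWithin_le_nhds,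
          by filter_upwards [self_mem_nhdsWithin] with r hr using by simpa using hr⟩
    refine hlim.frequently (Eventually.frequently ?_)
    filter_upwards [mem_nhdsWithin_of_mem_nhds (Ioi_mem_nhds one_pos)] with r hr using h r hr
  refine hinterior.of_subset_closure hf' hg' (fun w hw ↦ ⟨le_of_lt hw, ?_⟩) fun w hw ↦ ?_
  · rintro rfl
    simp at hw
  · rw [Complex.closure_setOfPred_re_lt]
    exact hw.1

theorem ofReal_re_stableExponent_neg_one (α : ℝ) :
    ((stableExponent α (-1)).re : ℂ) = stableExponent α (-1) :=
  Complex.conj_eq_iff_re.1 (by rw [conj_stableExponent]; simp)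

theorem re_stableExponent_I_neg (hα : α ∈ Ioo 0 2) : (stableExponent α I).re < 0 := by
  have hint := integrableOn_rpow_mul_levyKernel hα (w := I) (by simp)
  have hre : (fun x : ℝ ↦ RCLike.re (((x ^ (-1 - α) : ℝ) : ℂ) * levyKernel I x))
      = fun x ↦ -(x ^ (-1 - α) * (1 - Real.cos x)) := by
    ext x
    simp [levyKernel, mul_comm I, Complex.exp_ofReal_mul_I_re]
    ring
  have hint' := hint.re
  rw [hre] at hint'
  have heq : (stableExponent α I).re = ∫ x in Ioi (0 : ℝ), -(x ^ (-1 - α) * (1 - Real.cos x)) := by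
    rw [← hre]
    exact (integral_re hint).symm
  rw [heq, integral_neg, neg_lt_zero,
    setIntegral_pos_iff_support_of_nonneg_ae _ (by simpa [IntegrableOn] using hint'.neg)]
  · refine lt_of_lt_of_le ?_ (measure_mono (s := Ioo 0 π) fun x hx ↦ ⟨?_, hx.1⟩)
    · simp [Real.pi_pos]
    · have hcos : Real.cos x < 1 := by
        rw [← Real.cos_zero]
        exact Real.cos_lt_cos_of_nonneg_of_le_pi le_rfl hx.2.le hx.1
      exact (mul_pos (Real.rpow_pos_of_pos hx.1 _) (sub_pos.2 hcos)).ne'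
  · filter_upwards [ae_restrict_mem measurableSet_Ioi] with x hx
    exact mul_nonneg (Real.rpow_nonneg (le_of_lt hx) _) (sub_nonneg.2 (Real.cos_le_one x))

theorem stableExponent_mul_I_eq_of_eq_neg_ofReal (hα : α ∈ Ioo 0 2) {g : ℂ → ℂ}
    (hg : ∀ w : ℂ, w.re ≤ 0 ∧ w ≠ 0 → DifferentiableAt ℂ g w)
    (h : ∀ r : ℝ, 0 < r → stableExponent α (-r) = g (-r)) {t : ℝ} (ht : t ≠ 0) :
    stableExponent α (t * I) = g (t * I) :=
  eqOn_of_eq_neg_ofReal (differentiableOn_stableExponent hα)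
    (fun w hw ↦ (hg w ⟨le_of_lt hw, by rintro rfl; simp at hw⟩).differentiableWithinAt)
    ((continuousOn_stableExponent hα).mono fun w hw ↦ hw.1)
    (fun w hw ↦ (hg w hw).continuousAt.continuousWithinAt) h
    (show (t * I : ℂ) ∈ {w : ℂ | w.re ≤ 0 ∧ w ≠ 0} by simp [ht])

theorem neg_mem_slitPlane_of_re_nonpos {w : ℂ} (hw : w.re ≤ 0 ∧ w ≠ 0) :
    -w ∈ Complex.slitPlane := by
  rw [Complex.mem_slitPlane_iff]
  rcases hw.1.lt_or_eq with h | h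
  · exact .inl (by simpa using h)
  · exact .inr fun him ↦ hw.2 (Complex.ext h (by simpa using him))

theorem log_neg_mul_I {t : ℝ} (ht : 0 < t) :
    Complex.log (-(t * I)) = Real.log t - π / 2 * I := by
  rw [← mul_neg, Complex.log_ofReal_mul ht (by simp), Complex.log_neg_I]
  ring

theorem stableExponent_mul_I_eq_of_ne_one (hα : α ∈ Ioo 0 2) (hα1 : α ≠ 1) {t : ℝ} (ht : 0 < t) :
    stableExponent α (t * I)
      = ((stableExponent α (-1)).re - (1 - α)⁻¹ : ℝ) * (t ^ α : ℝ) * Complex.exp (-(π * α / 2 * I))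
        - ((1 - α)⁻¹ : ℝ) * t * I := by
  have : 1 - α ≠ 0 := sub_ne_zero.2 hα1.symm
  let g (w : ℂ) : ℂ :=
    ((stableExponent α (-1)).re - (1 - α)⁻¹ : ℝ) * (-w) ^ (α : ℂ) - ((1 - α)⁻¹ : ℝ) * w
  have hg (w : ℂ) (hw : w.re ≤ 0 ∧ w ≠ 0) : DifferentiableAt ℂ g w :=
    (((differentiableAt_id.neg).cpow_const (neg_mem_slitPlane_of_re_nonpos hw)).const_mul _).sub
      (differentiableAt_id.const_mul _)
  rw [stableExponent_mul_I_eq_of_eq_neg_ofReal hα hg (fun r hr ↦ ?_) ht.ne']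
  · have hpow : (-(t * I)) ^ (α : ℂ) = (t ^ α : ℝ) * Complex.exp (-(π * α / 2 * I)) := by
      rw [Complex.cpow_def_of_ne_zero (by simp [ht.ne']), log_neg_mul_I ht, sub_mul, sub_eq_add_neg,
        Complex.exp_add, Real.rpow_def_of_pos ht]
      push_cast
      ring_nf
    simp only [g, hpow]
    ring
  · have hpow : ∫ x in (1 : ℝ)..r⁻¹, x ^ (-α) = (r⁻¹ * r ^ α - 1) * (1 - α)⁻¹ := by
      have hα1' : -α ≠ -1 := by simpa using hα1
      rw [integral_rpow (.inr ⟨hα1', notMem_uIcc_of_lt one_pos (by positivity)⟩),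
        neg_add_eq_sub, Real.one_rpow, div_eq_mul_inv, Real.rpow_sub (by positivity), Real.rpow_one,
        Real.inv_rpow hr.le, div_inv_eq_mul]
    rw [stableExponent_neg_ofReal hα hr, hpow, ← ofReal_re_stableExponent_neg_one]
    simp only [g, neg_neg, ← Complex.ofReal_cpow hr.le]
    have hr' : (r : ℂ) ≠ 0 := by exact_mod_cast hr.ne'
    push_cast
    field_simp
    ring

theorem stableExponent_one_mul_I_eq {t : ℝ} (ht : 0 < t) :
    stableExponent 1 (t * I)
      = -(π / 2 * t) - (Real.log t + (stableExponent 1 (-1)).re) * t * I := by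
  have hα : (1 : ℝ) ∈ Ioo 0 2 := by norm_num
  let g (w : ℂ) : ℂ := -w * ((stableExponent 1 (-1)).re + Complex.log (-w))
  have hg (w : ℂ) (hw : w.re ≤ 0 ∧ w ≠ 0) : DifferentiableAt ℂ g w :=
    differentiableAt_id.neg.mul
      ((differentiableAt_id.neg.clog (neg_mem_slitPlane_of_re_nonpos hw)).const_add _)
  rw [stableExponent_mul_I_eq_of_eq_neg_ofReal hα hg (fun r hr ↦ ?_) ht.ne']
  · simp only [g, log_neg_mul_I ht]
    linear_combination (π / 2 * t : ℂ) * Complex.I_mul_I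
  · have hinv : ∫ x in (1 : ℝ)..r⁻¹, x ^ (-1 : ℝ) = -Real.log r := by
      simp only [Real.rpow_neg_one]
      rw [integral_inv_of_pos one_pos (inv_pos.2 hr), div_one, Real.log_inv]
    rw [stableExponent_neg_ofReal hα hr, hinv, ← ofReal_re_stableExponent_neg_one]
    simp only [g, neg_neg, Real.rpow_one, Complex.ofReal_neg, Complex.ofReal_log hr.le]
    ring

end StableExponent

section HalfLine

variable {E : Type*} [NormedAddCommGroup E] {g : ℝ → E}

theorem integrable_of_integrableOn_Ioi_comp_neg (hpos : IntegrableOn g (Ioi 0))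
    (hneg : IntegrableOn (fun x ↦ g (-x)) (Ioi 0)) : Integrable g := by
  have hIio : IntegrableOn g (Iio 0) := by
    have h := (Measure.measurePreserving_neg (volume : Measure ℝ)).integrableOn_comp_preimage
      (Homeomorph.neg ℝ).measurableEmbedding (f := g) (s := Iio 0)
    rw [← h]
    simpa [Function.comp_def] using hneg
  rw [← integrableOn_univ, ← Iic_union_Ioi (a := (0 : ℝ))]
  exact ((integrableOn_Iic_iff_integrableOn_Iio (by simp)).2 hIio).union hpos

theorem integral_eq_setIntegral_Ioi_add_comp_neg [NormedSpace ℝ E] (hpos : IntegrableOn g (Ioi 0))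
    (hneg : IntegrableOn (fun x ↦ g (-x)) (Ioi 0)) :
    ∫ x, g x = (∫ x in Ioi 0, g x) + ∫ x in Ioi 0, g (-x) := by
  have hg := integrable_of_integrableOn_Ioi_comp_neg hpos hneg
  rw [← intervalIntegral.integral_Iic_add_Ioi hg.integrableOn hg.integrableOn (b := (0 : ℝ)),
    integral_comp_neg_Ioi, neg_zero, add_comm]

end HalfLine

section StableLevyMeasure

/-- The Lévy measure of an `α`-stable law, with density `cp x^(-1-α)` on the positive and
`cm |x|^(-1-α)` on the negative half-line. -/
noncomputable def stableLevyMeasure (α cp cm : ℝ) : Measure ℝ :=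
  volume.withDensity fun x ↦ ENNReal.ofReal ((if 0 < x then cp else cm) * |x| ^ (-1 - α))

variable {α cp cm : ℝ}

theorem integrable_stableLevyMeasure_and_integral_eq {E : Type*} [NormedAddCommGroup E]
    [NormedSpace ℝ E] (hcp : 0 ≤ cp) (hcm : 0 ≤ cm) {g : ℝ → E}
    (hpos : IntegrableOn (fun x ↦ x ^ (-1 - α) • g x) (Ioi 0))
    (hneg : IntegrableOn (fun x ↦ x ^ (-1 - α) • g (-x)) (Ioi 0)) :
    Integrable g (stableLevyMeasure α cp cm) ∧
      ∫ x, g x ∂stableLevyMeasure α cp cm = cp • (∫ x in Ioi 0, x ^ (-1 - α) • g x)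
        + cm • ∫ x in Ioi 0, x ^ (-1 - α) • g (-x) := by
  let ρ (x : ℝ) : ℝ := (if 0 < x then cp else cm) * |x| ^ (-1 - α)
  have hρ (x : ℝ) : 0 ≤ ρ x := by positivity
  have hmeas : Measurable fun x ↦ ENNReal.ofReal (ρ x) :=
    ((Measurable.ite measurableSet_Ioi measurable_const measurable_const).mul
      (by fun_prop)).ennreal_ofReal
  have hfin : ∀ᵐ x : ℝ, ENNReal.ofReal (ρ x) < ⊤ := .of_forall fun x ↦ ENNReal.ofReal_lt_top
  have hρpos : EqOn (fun x ↦ cp • x ^ (-1 - α) • g x) (fun x ↦ ρ x • g x) (Ioi 0) := fun x hx ↦ by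
    simp only [ρ, if_pos (mem_Ioi.1 hx), abs_of_pos (mem_Ioi.1 hx), mul_smul]
  have hρneg : EqOn (fun x ↦ cm • x ^ (-1 - α) • g (-x)) (fun x ↦ ρ (-x) • g (-x)) (Ioi 0) :=
    fun x hx ↦ by
      have hx' : ¬ 0 < -x := by simpa using le_of_lt hx
      simp only [ρ, if_neg hx', abs_neg, abs_of_pos (mem_Ioi.1 hx), mul_smul]
  have hpos' := IntegrableOn.congr_fun (hpos.smul cp) hρpos measurableSet_Ioi
  have hneg' := IntegrableOn.congr_fun (hneg.smul cm) hρneg measurableSet_Ioi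
  constructor
  · rw [stableLevyMeasure, integrable_withDensity_iff_integrable_smul' hmeas hfin]
    simp_rw [ENNReal.toReal_ofReal (hρ _)]
    exact integrable_of_integrableOn_Ioi_comp_neg hpos' hneg'
  · rw [stableLevyMeasure, integral_withDensity_eq_integral_toReal_smul hmeas hfin]
    simp_rw [ENNReal.toReal_ofReal (hρ _)]
    rw [integral_eq_setIntegral_Ioi_add_comp_neg hpos' hneg',
      ← setIntegral_congr_fun measurableSet_Ioi hρpos,
      ← setIntegral_congr_fun measurableSet_Ioi hρneg, integral_smul, integral_smul]

theorem integrable_min_one_sq_stableLevyMeasure (hα : α ∈ Ioo 0 2) (hcp : 0 ≤ cp) (hcm : 0 ≤ cm) :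
    Integrable (fun x : ℝ ↦ min 1 (x ^ 2)) (stableLevyMeasure α cp cm) := by
  have h := integrableOn_rpow_mul_min_one_sq hα
  exact (integrable_stableLevyMeasure_and_integral_eq hcp hcm h (by simpa using h)).1

theorem integral_levyKernel_stableLevyMeasure (hα : α ∈ Ioo 0 2) (hcp : 0 ≤ cp) (hcm : 0 ≤ cm)
    (t : ℝ) :
    ∫ x, levyKernel (t * I) x ∂stableLevyMeasure α cp cm
      = cp * stableExponent α (t * I) + cm * (starRingEnd ℂ) (stableExponent α (t * I)) := by
  have hpos := integrableOn_rpow_mul_levyKernel hα (w := t * I) (by simp)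
  have hneg := integrableOn_rpow_mul_levyKernel hα (w := -(t * I)) (by simp)
  have h := (integrable_stableLevyMeasure_and_integral_eq hcp hcm (g := levyKernel (t * I))
    (α := α) hpos (by simpa only [levyKernel_neg_right, Complex.real_smul] using hneg)).2
  have hconj : (starRingEnd ℂ) (t * I) = -(t * I) := by simp
  rw [conj_stableExponent, hconj]
  simpa only [levyKernel_neg_right, Complex.real_smul, stableExponent] using h

/-- The finite part of the jumps that produces the polynomial lower bound for the density: it has
the same tails as the Lévy measure but no singularity at the origin. -/
noncomputable def tailMeasure (α c : ℝ) : Measure ℝ :=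
  volume.withDensity fun x ↦ ENNReal.ofReal (c * (1 + |x|) ^ (-1 - α))

theorem tailMeasure_le_stableLevyMeasure (hα : 0 < α) (hcp : 0 ≤ cp) (hcm : 0 ≤ cm) :
    tailMeasure α (min cp cm) ≤ stableLevyMeasure α cp cm := by
  refine withDensity_mono ?_
  filter_upwards [compl_mem_ae_iff.2 (measure_singleton (0 : ℝ))] with x hx
  refine ENNReal.ofReal_le_ofReal (mul_le_mul ?_ ?_ (by positivity) (by positivity))
  · split_ifs
    exacts [min_le_left _ _, min_le_right _ _]
  · exact Real.rpow_le_rpow_of_nonpos (abs_pos.2 hx) (by linarith) (by linarith)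

theorem integrable_one_add_abs_rpow {r : ℝ} (hr : r < -1) :
    Integrable fun x : ℝ ↦ (1 + |x|) ^ r := by
  simpa using integrable_one_add_norm (μ := (volume : Measure ℝ)) (r := -r) (by simp; linarith)

theorem isFiniteMeasure_tailMeasure (hα : 0 < α) (c : ℝ) : IsFiniteMeasure (tailMeasure α c) :=
  isFiniteMeasure_withDensity_ofReal
    ((integrable_one_add_abs_rpow (by linarith)).const_mul c).2

end StableLevyMeasure

section CharacteristicExponent

variable {θ : Fin 4 → ℝ}

theorem psiM_of_pos_of_eq_one (hσ : 0 < θ 1) (h1 : θ 2 = 1) {t : ℝ} (ht : 0 < t) :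
    psiM θ t = -(θ 1 * t : ℝ) - (2 * θ 3 / π * (θ 1 * t) * (Real.log (θ 1) + Real.log t) : ℝ) * I
      + (θ 0 * t : ℝ) * I := by
  rw [psiM, if_pos h1, abs_of_pos (mul_pos hσ ht), Real.log_mul hσ.ne' ht.ne']
  push_cast
  ring

theorem psiM_of_pos_of_ne_one (hσ : 0 < θ 1) (h1 : θ 2 ≠ 1) {t : ℝ} (ht : 0 < t) :
    psiM θ t = (-(θ 1 * t) ^ θ 2 : ℝ) * (1 - (θ 3 * Real.tan (π * θ 2 / 2) : ℝ) * I)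
      + ((θ 0 - θ 3 * Real.tan (π * θ 2 / 2) * θ 1) * t : ℝ) * I := by
  have hpos := mul_pos hσ ht
  have hmul : (θ 1 * t) ^ θ 2 * (θ 1 * t) ^ (1 - θ 2) = θ 1 * t := by
    rw [← Real.rpow_add hpos, add_sub_cancel, Real.rpow_one]
  rw [psiM, if_neg h1, abs_of_pos hpos, Real.sign_of_pos ht]
  have hmul' := congrArg ((↑) : ℝ → ℂ) hmul
  push_cast at hmul' ⊢
  linear_combination (-(θ 3 * Complex.tan (π * θ 2 / 2)) * I) * hmul'

theorem psiM_zero (hα : θ 2 ≠ 0) : psiM θ 0 = 0 := by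
  unfold psiM
  split_ifs <;> simp [Real.zero_rpow hα]

theorem psiM_neg (θ : Fin 4 → ℝ) (t : ℝ) : psiM θ (-t) = (starRingEnd ℂ) (psiM θ t) := by
  unfold psiM
  split_ifs <;>
    simp only [map_add, map_sub, map_mul, map_one, Complex.conj_ofReal, Complex.conj_I, mul_neg,
      abs_neg, Real.sign_neg] <;>
    push_cast <;> ring

theorem psiM_re (θ : Fin 4 → ℝ) (t : ℝ) : (psiM θ t).re = -|θ 1 * t| ^ θ 2 := by
  unfold psiM
  split_ifs with h
  · simp [h]
  · simp only [Complex.add_re, Complex.mul_re, Complex.ofReal_re, Complex.ofReal_im, Complex.I_re,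
      Complex.I_im, Complex.one_re]
    ring

theorem norm_phiM (θ : Fin 4 → ℝ) (t : ℝ) : ‖phiM θ t‖ = Real.exp (-|θ 1 * t| ^ θ 2) := by
  rw [phiM, Complex.norm_exp, psiM_re]

theorem exists_psiM_eq_stableExponent_of_eq_one (hθ : θ ∈ ThetaInt) (h1 : θ 2 = 1) :
    ∃ cp cm d : ℝ, 0 < cp ∧ 0 < cm ∧ ∀ t : ℝ, 0 < t → psiM θ t = cp * stableExponent (θ 2) (t * I)
      + cm * (starRingEnd ℂ) (stableExponent (θ 2) (t * I)) + d * t * I := by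
  obtain ⟨hσ, -, hβ⟩ := hθ
  refine ⟨(1 + θ 3) * θ 1 / π, (1 - θ 3) * θ 1 / π,
    θ 0 + 2 * θ 3 * θ 1 / π * ((stableExponent 1 (-1)).re - Real.log (θ 1)),
    div_pos (mul_pos (by linarith [hβ.1]) hσ) Real.pi_pos,
    div_pos (mul_pos (by linarith [hβ.2]) hσ) Real.pi_pos, fun t ht ↦ ?_⟩
  have hπ : (π : ℂ) ≠ 0 := by exact_mod_cast Real.pi_ne_zero
  rw [psiM_of_pos_of_eq_one hσ h1 ht, h1, stableExponent_one_mul_I_eq ht]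
  simp only [map_sub, map_neg, map_mul, map_div₀, map_add, Complex.conj_ofReal, Complex.conj_I,
    Complex.conj_ofNat]
  push_cast
  field_simp
  ring

theorem exists_psiM_eq_stableExponent_of_ne_one (hθ : θ ∈ ThetaInt) (h1 : θ 2 ≠ 1) :
    ∃ cp cm d : ℝ, 0 < cp ∧ 0 < cm ∧ ∀ t : ℝ, 0 < t → psiM θ t = cp * stableExponent (θ 2) (t * I)
      + cm * (starRingEnd ℂ) (stableExponent (θ 2) (t * I)) + d * t * I := by
  obtain ⟨hσ, hα, hβ⟩ := hθ
  set α := θ 2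
  set A : ℝ := (stableExponent α (-1)).re - (1 - α)⁻¹
  set x : ℝ := π * α / 2
  have hE {t : ℝ} (ht : 0 < t) : stableExponent α (t * I)
      = A * (t ^ α : ℝ) * (Real.cos x - Real.sin x * I) - ((1 - α)⁻¹ : ℝ) * t * I := by
    have hexp : Complex.exp (-(π * α / 2 * I)) = Real.cos x - Real.sin x * I := by
      rw [← neg_mul, Complex.exp_mul_I, Complex.cos_neg, Complex.sin_neg, neg_mul, ← sub_eq_add_neg]
      simp [x]
    rw [stableExponent_mul_I_eq_of_ne_one hα h1 ht, hexp]
  have hAcos : A * Real.cos x < 0 := by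
    have h := re_stableExponent_I_neg hα
    rw [← one_mul I, ← Complex.ofReal_one, hE one_pos] at h
    simpa [← Complex.ofReal_cos, ← Complex.ofReal_sin] using h
  have htan : Real.tan x * Real.cos x = Real.sin x :=
    Real.tan_mul_cos fun h ↦ by simp [h] at hAcos
  set S : ℝ := θ 1 ^ α / -(A * Real.cos x) with hS
  have hSpos : 0 < S := div_pos (Real.rpow_pos_of_pos hσ α) (neg_pos.2 hAcos)
  have hSA : S * (A * Real.cos x) = -θ 1 ^ α := by
    rw [hS, div_mul_eq_mul_div, div_neg, mul_div_cancel_right₀ _ hAcos.ne]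
  refine ⟨(1 + θ 3) / 2 * S, (1 - θ 3) / 2 * S,
    θ 0 - θ 3 * Real.tan x * θ 1 + θ 3 * S * (1 - α)⁻¹,
    mul_pos (by linarith [hβ.1]) hSpos, mul_pos (by linarith [hβ.2]) hSpos, fun t ht ↦ ?_⟩
  have hψ : psiM θ t = (-(θ 1 * t) ^ α : ℝ) * (1 - (θ 3 * Real.tan x : ℝ) * I)
      + ((θ 0 - θ 3 * Real.tan x * θ 1) * t : ℝ) * I := psiM_of_pos_of_ne_one hσ h1 ht
  rw [hψ, hE ht, Real.mul_rpow hσ.le ht.le, ← neg_mul, ← hSA, ← htan]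
  simp only [map_sub, map_mul, Complex.conj_ofReal, Complex.conj_I]
  push_cast
  ring

theorem exists_psiM_eq_integral_levyKernel (hθ : θ ∈ ThetaInt) :
    ∃ cp cm d : ℝ, 0 < cp ∧ 0 < cm ∧ ∀ t : ℝ,
      psiM θ t = ∫ x, levyKernel (t * I) x ∂stableLevyMeasure (θ 2) cp cm + d * t * I := by
  obtain ⟨cp, cm, d, hcp, hcm, h⟩ : ∃ cp cm d : ℝ, 0 < cp ∧ 0 < cm ∧ ∀ t : ℝ, 0 < t →
      psiM θ t = cp * stableExponent (θ 2) (t * I)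
        + cm * (starRingEnd ℂ) (stableExponent (θ 2) (t * I)) + d * t * I := by
    by_cases h1 : θ 2 = 1
    exacts [exists_psiM_eq_stableExponent_of_eq_one hθ h1,
      exists_psiM_eq_stableExponent_of_ne_one hθ h1]
  refine ⟨cp, cm, d, hcp, hcm, fun t ↦ ?_⟩
  rw [integral_levyKernel_stableLevyMeasure hθ.2.1 hcp.le hcm.le]
  rcases lt_trichotomy t 0 with ht | rfl | ht
  · rw [← neg_neg t, psiM_neg, h (-t) (neg_pos.2 ht)]
    simp [conj_stableExponent]
  · simp [psiM_zero hθ.2.1.1.ne', stableExponent_zero_right]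
  · exact h t ht

end CharacteristicExponent

section DensityLowerBound

theorem integral_mul_charFun {P : Measure ℝ} [IsFiniteMeasure P] {h : ℝ → ℂ} (hh : Integrable h) :
    ∫ t, h t * charFun P t = ∫ y, (∫ t, h t * Complex.exp (t * y * I)) ∂P := by
  simp_rw [charFun_apply_real, ← integral_const_mul]
  refine integral_integral_swap ?_
  refine (hh.mul_prod (integrable_const (1 : ℂ))).mono
    (hh.1.comp_fst.mul (by fun_prop)) (.of_forall fun z ↦ ?_)
  simp [Function.uncurry, ← Complex.ofReal_mul, Complex.norm_exp_ofReal_mul_I]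

/-- The Gaussian approximate identity as `c → ∞`, scaled as in Mathlib's Fourier inversion
theorem. -/
noncomputable def gaussianApproxId (c z : ℝ) : ℝ := √(π * c) * Real.exp (-π ^ 2 * c * z ^ 2)

theorem gaussianApproxId_nonneg (c z : ℝ) : 0 ≤ gaussianApproxId c z := by
  unfold gaussianApproxId; positivity

theorem gaussianApproxId_le {c : ℝ} (hc : 0 ≤ c) (z : ℝ) : gaussianApproxId c z ≤ √(π * c) :=
  mul_le_of_le_one_right (by positivity)
    (Real.exp_le_one_iff.2 (by nlinarith [mul_nonneg hc (mul_nonneg (sq_nonneg π) (sq_nonneg z))]))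

@[fun_prop]
theorem continuous_gaussianApproxId (c : ℝ) : Continuous (gaussianApproxId c) := by
  unfold gaussianApproxId; fun_prop

theorem tendsto_integral_gaussianApproxId_mul {κ : ℝ → ℝ} (hκ : Integrable κ) {x : ℝ}
    (hx : ContinuousAt κ x) :
    Tendsto (fun c ↦ ∫ y, gaussianApproxId c (x - y) * κ y) atTop (𝓝 (κ x)) := by
  have h := Real.tendsto_integral_gaussian_smul' (f := fun y ↦ (κ y : ℂ)) hκ.ofReal
    (Complex.continuous_ofReal.continuousAt.comp hx)
  rw [← tendsto_ofReal_iff]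
  refine h.congr' ?_
  filter_upwards [eventually_ge_atTop 0] with c hc
  rw [← integral_complex_ofReal]
  congr with y
  rw [gaussianApproxId, Real.sqrt_eq_rpow, Real.norm_eq_abs, ← Complex.ofReal_pow |x - y|,
    sq_abs]
  simp [Complex.ofReal_cpow (mul_nonneg Real.pi_nonneg hc)]

theorem fourierIntegral_gaussian_eq_gaussianApproxId {c : ℝ} (hc : 0 < c) (z : ℝ) :
    ∫ t : ℝ, Complex.exp (-((4 * π ^ 2 * c)⁻¹ : ℝ) * t ^ 2 + -(z * I) * t + 0)
      = (2 * π * gaussianApproxId c z : ℝ) := by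
  set b : ℂ := -((4 * π ^ 2 * c)⁻¹ : ℝ) with hb
  have hbre : b.re < 0 := by
    rw [hb, ← Complex.ofReal_neg, Complex.ofReal_re]
    exact neg_neg_of_pos (by positivity)
  have hsqrt : (2 * π * √(π * c) : ℝ) = (π / -b) ^ (1 / 2 : ℂ) := by
    have hpos : 0 ≤ π / (4 * π ^ 2 * c)⁻¹ := by positivity
    have hsq : π / (4 * π ^ 2 * c)⁻¹ = (2 * π) ^ 2 * (π * c) := by field_simp; ring
    have h := Complex.ofReal_cpow hpos (1 / 2)
    rw [← Real.sqrt_eq_rpow, hsq, Real.sqrt_mul (by positivity), Real.sqrt_sq (by positivity),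
      ← hsq] at h
    rw [h, hb]
    push_cast
    simp
  have hexp : (0 : ℂ) - (-(z * I)) ^ 2 / (4 * b) = (-π ^ 2 * c * z ^ 2 : ℝ) := by
    have : (π : ℂ) ≠ 0 := by exact_mod_cast Real.pi_ne_zero
    have : (c : ℂ) ≠ 0 := by exact_mod_cast hc.ne'
    rw [hb, neg_sq, mul_pow, Complex.I_sq]
    push_cast
    field_simp
    ring
  rw [integral_cexp_quadratic hbre, hexp, gaussianApproxId, ← mul_assoc,
    Complex.ofReal_mul (2 * π * _), hsqrt, Complex.ofReal_exp]

theorem integral_gaussian_mul_charFun {P : Measure ℝ} [IsFiniteMeasure P] {c : ℝ} (hc : 0 < c)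
    (x : ℝ) :
    ∫ t : ℝ, Complex.exp (-((4 * π ^ 2 * c)⁻¹ : ℝ) * ‖t‖ ^ 2) •
        (Complex.exp (-I * t * x) * charFun P t)
      = (2 * π * ∫ y, gaussianApproxId c (x - y) ∂P : ℝ) := by
  have hbre : (-((4 * π ^ 2 * c)⁻¹ : ℝ) : ℂ).re < 0 := by
    rw [← Complex.ofReal_neg, Complex.ofReal_re]
    exact neg_neg_of_pos (by positivity)
  have hint := integrable_cexp_quadratic' hbre (-(x * I)) 0
  rw [← integral_const_mul, ← integral_complex_ofReal]
  simp_rw [← fourierIntegral_gaussian_eq_gaussianApproxId hc]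
  calc
    _ = ∫ t : ℝ, Complex.exp (-((4 * π ^ 2 * c)⁻¹ : ℝ) * t ^ 2 + -(x * I) * t + 0)
          * charFun P t := by
      congr with t
      rw [smul_eq_mul, ← mul_assoc, ← Complex.exp_add, Real.norm_eq_abs, ← Complex.ofReal_pow,
        sq_abs]
      push_cast
      ring_nf
    _ = _ := by
      rw [integral_mul_charFun hint]
      congr with y
      congr with t
      rw [← Complex.exp_add]
      push_cast
      ring_nf

theorem le_re_integral_charFun_of_withDensity_le {P : Measure ℝ} [IsFiniteMeasure P]
    (hP : Integrable (charFun P)) {κ : ℝ → ℝ} (hκ0 : ∀ y, 0 ≤ κ y) (hκ : Integrable κ)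
    (hle : volume.withDensity (fun y ↦ ENNReal.ofReal (κ y)) ≤ P) {x : ℝ} (hx : ContinuousAt κ x) :
    2 * π * κ x ≤ (∫ t : ℝ, Complex.exp (-I * t * x) * charFun P t).re := by
  have hint : Integrable fun t : ℝ ↦ Complex.exp (-I * t * x) * charFun P t :=
    hP.mono (.mul (by fun_prop) hP.1) (.of_forall fun t ↦ by simp [Complex.norm_exp])
  have hright := (Complex.continuous_re.tendsto _).comp
    ((Real.tendsto_integral_cexp_sq_smul hint).comp
      (tendsto_id.const_mul_atTop (by positivity : 0 < 4 * π ^ 2)))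
  refine le_of_tendsto_of_tendsto ((tendsto_integral_gaussianApproxId_mul hκ hx).const_mul (2 * π))
    hright ?_
  filter_upwards [eventually_gt_atTop 0] with c hc
  have hparseval := congrArg Complex.re (integral_gaussian_mul_charFun (P := P) hc x)
  refine le_trans ?_ hparseval.ge
  rw [Complex.ofReal_re]
  gcongr
  have hsmul : ∫ y, gaussianApproxId c (x - y) * κ y
      = ∫ y, gaussianApproxId c (x - y) ∂volume.withDensity fun y ↦ ENNReal.ofReal (κ y) := by
    rw [integral_withDensity_eq_integral_toReal_smul₀ hκ.1.aemeasurable.ennreal_ofReal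
      (.of_forall fun y ↦ ENNReal.ofReal_lt_top)]
    simp [ENNReal.toReal_ofReal (hκ0 _), mul_comm]
  rw [hsmul]
  refine integral_mono_measure hle (.of_forall fun y ↦ gaussianApproxId_nonneg c (x - y)) ?_
  refine .of_bound (by fun_prop) (√(π * c)) (.of_forall fun y ↦ ?_)
  rw [Real.norm_of_nonneg (gaussianApproxId_nonneg c (x - y))]
  exact gaussianApproxId_le hc.le (x - y)

theorem conv_withDensity (G : Measure ℝ) [SFinite G] {ρ : ℝ → ENNReal} (hρ : Measurable ρ)
    [SFinite (volume.withDensity ρ)] :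
    G ∗ volume.withDensity ρ = volume.withDensity fun x ↦ ∫⁻ z, ρ (x - z) ∂G := by
  refine Measure.ext_of_lintegral _ fun f hf ↦ ?_
  have hmeas : Measurable fun x ↦ ∫⁻ z, ρ (x - z) ∂G :=
    Measurable.lintegral_prod_right' (f := fun p : ℝ × ℝ ↦ ρ (p.1 - p.2)) (by fun_prop)
  rw [Measure.lintegral_conv hf, lintegral_withDensity_eq_lintegral_mul _ hmeas hf]
  calc
    _ = ∫⁻ z, (∫⁻ x, ρ (x - z) * f x) ∂G := by
      refine lintegral_congr fun z ↦ ?_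
      rw [lintegral_withDensity_eq_lintegral_mul _ hρ (by fun_prop),
        ← lintegral_sub_right_eq_self _ z]
      simp
    _ = _ := by
      rw [lintegral_lintegral_swap (by fun_prop)]
      exact lintegral_congr fun x ↦ lintegral_mul_const _ (by fun_prop)

theorem integrable_one_add_abs_rpow_of_nonpos {G : Measure ℝ} [IsFiniteMeasure G] {r : ℝ}
    (hr : r ≤ 0) : Integrable (fun z : ℝ ↦ (1 + |z|) ^ r) G := by
  refine .of_bound (Measurable.aestronglyMeasurable (by fun_prop)) 1 (.of_forall fun z ↦ ?_)
  rw [Real.norm_of_nonneg (by positivity)]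
  exact Real.rpow_le_one_of_one_le_of_nonpos (by simp) hr

theorem withDensity_le_conv_tailMeasure {α c : ℝ} (hα : 0 < α) (hc : 0 ≤ c) (G : Measure ℝ)
    [IsFiniteMeasure G] :
    (volume.withDensity fun x ↦ ENNReal.ofReal
        ((c * ∫ z, (1 + |z|) ^ (-1 - α) ∂G) * (1 + |x|) ^ (-1 - α))) ≤ G ∗ tailMeasure α c := by
  have hfin := isFiniteMeasure_tailMeasure hα c
  rw [tailMeasure] at hfin ⊢
  rw [conv_withDensity G (by fun_prop)]
  refine withDensity_mono (.of_forall fun x ↦ ?_)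
  have htri (z : ℝ) : (1 + |z|) ^ (-1 - α) * (1 + |x|) ^ (-1 - α) ≤ (1 + |x - z|) ^ (-1 - α) := by
    rw [← Real.mul_rpow (by positivity) (by positivity)]
    refine Real.rpow_le_rpow_of_nonpos (by positivity) ?_ (by linarith)
    nlinarith [abs_sub x z, mul_nonneg (abs_nonneg z) (abs_nonneg x)]
  have hint : Integrable (fun z ↦ c * (1 + |z|) ^ (-1 - α) * (1 + |x|) ^ (-1 - α)) G :=
    ((integrable_one_add_abs_rpow_of_nonpos (by linarith)).const_mul c).mul_const _
  beta_reduce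
  rw [← integral_const_mul, ← integral_mul_const, ofReal_integral_eq_lintegral_ofReal hint
    (.of_forall fun z ↦ by positivity)]
  refine lintegral_mono fun z ↦ ENNReal.ofReal_le_ofReal ?_
  rw [mul_assoc]
  exact mul_le_mul_of_nonneg_left (htri z) hc

end DensityLowerBound

section

variable {θ : Fin 4 → ℝ}

theorem integrable_exp_neg_abs_mul_rpow {σ α : ℝ} (hσ : σ ≠ 0) (hα : 0 < α) :
    Integrable fun t : ℝ ↦ Real.exp (-|σ * t| ^ α) := by
  have h : IntegrableOn (fun t : ℝ ↦ Real.exp (-|t| ^ α)) (Ioi 0) := by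
    refine (integrableOn_rpow_mul_exp_neg_rpow (s := 0) (by norm_num) hα).congr_fun (fun t ht ↦ ?_)
      measurableSet_Ioi
    simp [abs_of_pos (mem_Ioi.1 ht)]
  exact (integrable_of_integrableOn_Ioi_comp_neg h (by simpa using h)).comp_mul_left' hσ

theorem exists_charFun_eq_phiM (hθ : θ ∈ ThetaInt) :
    ∃ P : Measure ℝ, IsProbabilityMeasure P ∧ charFun P = phiM θ ∧
      ∃ G : Measure ℝ, IsProbabilityMeasure G ∧ ∃ ε c : ℝ, 0 < ε ∧ 0 < c ∧
        ENNReal.ofReal ε • (G ∗ tailMeasure (θ 2) c) ≤ P := by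
  obtain ⟨cp, cm, d, hcp, hcm, hψ⟩ := exists_psiM_eq_integral_levyKernel hθ
  have hα : 0 < θ 2 := hθ.2.1.1
  have := isFiniteMeasure_tailMeasure hα (min cp cm)
  obtain ⟨P, hP, hφ, G, hG, hGP⟩ := exists_smul_conv_le_of_le
    (integrable_min_one_sq_stableLevyMeasure hθ.2.1 hcp.le hcm.le)
    (tailMeasure_le_stableLevyMeasure hα hcp.le hcm.le) d
  exact ⟨P, hP, funext fun t ↦ by rw [hφ, phiM, hψ], G, hG, _, _, Real.exp_pos _,
    lt_min hcp hcm, hGP⟩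

theorem continuous_phiM (hθ : θ ∈ ThetaInt) : Continuous (phiM θ) := by
  obtain ⟨P, _, hφ, -⟩ := exists_charFun_eq_phiM hθ
  rw [← hφ]
  fun_prop

theorem integrable_phiM (hθ : θ ∈ ThetaInt) : Integrable (phiM θ) :=
  (integrable_exp_neg_abs_mul_rpow hθ.1.ne' hθ.2.1.1).mono'
    (continuous_phiM hθ).aestronglyMeasurable (.of_forall fun t ↦ (norm_phiM θ t).le)

theorem exists_rpow_le_fM (hθ : θ ∈ ThetaInt) :
    ∃ C, 0 < C ∧ ∀ x, C * (1 + |x|) ^ (-1 - θ 2) ≤ fM θ x := by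
  obtain ⟨P, hP, hφ, G, hG, ε, c, hε, hc, hGP⟩ := exists_charFun_eq_phiM hθ
  have hα : 0 < θ 2 := hθ.2.1.1
  set K := c * ∫ z, (1 + |z|) ^ (-1 - θ 2) ∂G
  have hK : 0 < K := by
    refine mul_pos hc ((integral_pos_iff_support_of_nonneg (fun z ↦ by positivity)
      (integrable_one_add_abs_rpow_of_nonpos (by linarith))).2 ?_)
    have hsupp : (Function.support fun z : ℝ ↦ (1 + |z|) ^ (-1 - θ 2)) = univ :=
      Function.support_eq_univ fun z ↦ by positivity
    simp [hsupp]
  have hle :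
      (volume.withDensity fun x ↦ ENNReal.ofReal (ε * (K * (1 + |x|) ^ (-1 - θ 2)))) ≤ P := by
    refine le_trans ?_ hGP
    simp only [ENNReal.ofReal_mul hε.le]
    refine (withDensity_smul (ENNReal.ofReal ε) (by fun_prop)).le.trans ?_
    gcongr
    exact withDensity_le_conv_tailMeasure hα hc.le G
  have hcont : Continuous fun x ↦ ε * (K * (1 + |x|) ^ (-1 - θ 2)) :=
    ((Continuous.rpow_const (by fun_prop) fun x ↦ .inl (by positivity)).const_mul K).const_mul ε
  refine ⟨ε * K, by positivity, fun x ↦ ?_⟩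
  have h := le_re_integral_charFun_of_withDensity_le (hφ ▸ integrable_phiM hθ)
    (fun y ↦ by positivity) (((integrable_one_add_abs_rpow (by linarith)).const_mul K).const_mul ε)
    hle hcont.continuousAt (x := x)
  rw [fM, ← hφ, one_div_mul_eq_div, le_div_iff₀' (by positivity), mul_assoc ε]
  exact h

end

section OscillatoryIntegrals

theorem norm_exp_neg_I_mul_mul (t x : ℝ) : ‖Complex.exp (-I * t * x)‖ = 1 := by
  rw [Complex.norm_exp]
  simp

theorem hasDerivAt_exp_neg_I_mul_mul_div {x : ℝ} (hx : x ≠ 0) (t : ℝ) :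
    HasDerivAt (fun t : ℝ ↦ Complex.exp (-I * t * x) / (-I * x)) (Complex.exp (-I * t * x)) t := by
  have hlin : HasDerivAt (fun t : ℝ ↦ -I * (t : ℂ) * x) (-I * x) t := by
    simpa using ((hasDerivAt_id t).ofReal_comp.const_mul (-I)).mul_const (x : ℂ)
  convert! hlin.cexp.div_const (-I * x) using 1
  have hxc : (x : ℂ) ≠ 0 := mod_cast hx
  field_simp

theorem integrable_mul_exp_neg_I {μ : Measure ℝ} {F : ℝ → ℂ} (hF : Integrable F μ) (x : ℝ) :
    Integrable (fun t : ℝ ↦ F t * Complex.exp (-I * t * x)) μ :=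
  hF.mul_bdd (c := 1) (Continuous.aestronglyMeasurable (by fun_prop))
    (.of_forall fun t ↦ (norm_exp_neg_I_mul_mul t x).le)

theorem norm_integral_mul_exp_neg_I_le {μ : Measure ℝ} (F : ℝ → ℂ) (x : ℝ) :
    ‖∫ t, F t * Complex.exp (-I * t * x) ∂μ‖ ≤ ∫ t, ‖F t‖ ∂μ := by
  refine (norm_integral_le_integral_norm _).trans_eq ?_
  simp_rw [norm_mul, norm_exp_neg_I_mul_mul, mul_one]

theorem abs_mul_norm_setIntegral_Ioi_mul_exp_neg_I_le {F F' : ℝ → ℂ} {a : ℝ} {L : ℂ}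
    (hderiv : ∀ t ∈ Ioi a, HasDerivAt F (F' t) t) (hF : IntegrableOn F (Ioi a))
    (hF' : IntegrableOn F' (Ioi a)) (hL : Tendsto F (𝓝[>] a) (𝓝 L)) (x : ℝ) :
    |x| * ‖∫ t in Ioi a, F t * Complex.exp (-I * t * x)‖ ≤
      ‖L‖ + ‖∫ t in Ioi a, F' t * Complex.exp (-I * t * x)‖ := by
  rcases eq_or_ne x 0 with rfl | hx
  · simpa using by positivity
  let v : ℝ → ℂ := fun t ↦ Complex.exp (-I * t * x) / (-I * x)
  have norm_v (t : ℝ) : ‖v t‖ = |x|⁻¹ := by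
    simp only [v, norm_div, norm_exp_neg_I_mul_mul]
    simp
  have hv : Continuous v := by fun_prop
  have hF'v : IntegrableOn (F' * v) (Ioi a) := by
    refine ((integrable_mul_exp_neg_I hF' x).div_const (-I * x)).congr (.of_forall fun t ↦ ?_)
    simp [v, mul_div_assoc]
  have hbot : Tendsto (F * v) (𝓝[>] a) (𝓝 (L * v a)) :=
    hL.mul (hv.continuousAt.tendsto.mono_left nhdsWithin_le_nhds)
  have htop : Tendsto (F * v) atTop (𝓝 0) := by
    refine (tendsto_zero_of_hasDerivAt_of_integrableOn_Ioi hderiv hF' hF).zero_mul_isBoundedUnder_le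
      (isBoundedUnder_of ⟨|x|⁻¹, fun t ↦ (norm_v t).le⟩)
  have hparts := integral_Ioi_mul_deriv_eq_deriv_mul hderiv
    (fun t _ ↦ hasDerivAt_exp_neg_I_mul_mul_div hx t) (integrable_mul_exp_neg_I hF x) hF'v hbot htop
  have hout : ∫ t in Ioi a, F' t * v t =
      (∫ t in Ioi a, F' t * Complex.exp (-I * t * x)) / (-I * x) := by
    rw [← integral_div]
    simp only [v, mul_div_assoc]
  rw [hparts, hout, zero_sub, ← neg_add', norm_neg]
  calc _ ≤ |x| * (‖L * v a‖ + ‖(∫ t in Ioi a, F' t * Complex.exp (-I * t * x)) / (-I * x)‖) := by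
        gcongr; exact norm_add_le _ _
    _ = _ := by
        have hxabs : |x| ≠ 0 := abs_ne_zero.2 hx
        simp only [norm_mul, norm_v, norm_div, norm_neg, Complex.norm_I, one_mul,
          Complex.norm_real, Real.norm_eq_abs]
        rw [mul_add, mul_div_cancel₀ _ hxabs, mul_left_comm, mul_inv_cancel₀ hxabs, mul_one]

theorem norm_setIntegral_Ioc_mul_exp_neg_I_le {G : ℝ → ℂ} {γ C c : ℝ} (hγ : 0 < γ) (hc : 0 ≤ c)
    (hG : ∀ t ∈ Ioc 0 c, ‖G t‖ ≤ C * t ^ (γ - 1)) (hint : IntegrableOn G (Ioc 0 c)) (x : ℝ) :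
    ‖∫ t in Ioc 0 c, G t * Complex.exp (-I * t * x)‖ ≤ C / γ * c ^ γ := by
  have hdom : IntegrableOn (fun t ↦ C * t ^ (γ - 1)) (Ioc 0 c) :=
    (intervalIntegral.intervalIntegrable_rpow' (by linarith)).1.const_mul C
  calc _ ≤ ∫ t in Ioc 0 c, ‖G t‖ := norm_integral_mul_exp_neg_I_le _ _
    _ ≤ ∫ t in Ioc 0 c, C * t ^ (γ - 1) :=
        setIntegral_mono_on hint.norm hdom measurableSet_Ioc hG
    _ = C / γ * c ^ γ := by
        rw [integral_const_mul, ← intervalIntegral.integral_of_le hc,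
          integral_rpow (.inl (by linarith)), sub_add_cancel, Real.zero_rpow hγ.ne']
        ring

theorem abs_mul_norm_setIntegral_Ioi_mul_exp_neg_I_le_rpow {G G' : ℝ → ℂ} {γ C C' c : ℝ}
    (hγ : γ < 1) (hc : 0 < c) (hderiv : ∀ t, c ≤ t → HasDerivAt G (G' t) t)
    (hG : ‖G c‖ ≤ C * c ^ (γ - 1)) (hG' : ∀ t, c < t → ‖G' t‖ ≤ C' * t ^ (γ - 2))
    (hint : IntegrableOn G (Ioi c)) (x : ℝ) :
    |x| * ‖∫ t in Ioi c, G t * Complex.exp (-I * t * x)‖ ≤ (C + C' / (1 - γ)) * c ^ (γ - 1) := by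
  have hdom : IntegrableOn (fun t ↦ C' * t ^ (γ - 2)) (Ioi c) :=
    (integrableOn_Ioi_rpow_of_lt (by linarith) hc).const_mul C'
  have hG'meas : AEStronglyMeasurable G' (volume.restrict (Ioi c)) :=
    (stronglyMeasurable_deriv G).aestronglyMeasurable.congr <|
      (ae_restrict_mem measurableSet_Ioi).mono fun t ht ↦ (hderiv t ht.le).deriv
  have hG'int : IntegrableOn G' (Ioi c) := hdom.mono' hG'meas <|
    (ae_restrict_mem measurableSet_Ioi).mono hG'
  have hG'norm : ‖∫ t in Ioi c, G' t * Complex.exp (-I * t * x)‖ ≤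
      C' / (1 - γ) * c ^ (γ - 1) := by
    calc _ ≤ ∫ t in Ioi c, ‖G' t‖ := norm_integral_mul_exp_neg_I_le _ _
      _ ≤ ∫ t in Ioi c, C' * t ^ (γ - 2) :=
          setIntegral_mono_on hG'int.norm hdom measurableSet_Ioi hG'
      _ = C' / (1 - γ) * c ^ (γ - 1) := by
          rw [integral_const_mul, integral_Ioi_rpow_of_lt (by linarith) hc,
            show γ - 2 + 1 = γ - 1 by ring, ← neg_sub 1 γ, neg_div_neg_eq]
          ring
  calc _ ≤ ‖G c‖ + ‖∫ t in Ioi c, G' t * Complex.exp (-I * t * x)‖ :=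
        abs_mul_norm_setIntegral_Ioi_mul_exp_neg_I_le
          (fun t ht ↦ hderiv t (le_of_lt ht)) hint hG'int
          ((hderiv c le_rfl).continuousAt.tendsto.mono_left nhdsWithin_le_nhds) x
    _ ≤ C * c ^ (γ - 1) + C' / (1 - γ) * c ^ (γ - 1) := add_le_add hG hG'norm
    _ = _ := by ring

/- The splitting point `|x|⁻¹` balances the trivial bound near the origin against integration by
parts at infinity. -/
theorem norm_setIntegral_Ioi_mul_exp_neg_I_le {G G' : ℝ → ℂ} {γ C C' : ℝ} (hγ₀ : 0 < γ)
    (hγ₁ : γ < 1) (hderiv : ∀ t, 0 < t → HasDerivAt G (G' t) t)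
    (hG : ∀ t, 0 < t → ‖G t‖ ≤ C * t ^ (γ - 1)) (hG' : ∀ t, 0 < t → ‖G' t‖ ≤ C' * t ^ (γ - 2))
    (hint : IntegrableOn G (Ioi 0)) {x : ℝ} (hx : x ≠ 0) :
    ‖∫ t in Ioi 0, G t * Complex.exp (-I * t * x)‖ ≤
      (C / γ + (C + C' / (1 - γ))) * |x| ^ (-γ) := by
  have hx₀ : 0 < |x| := abs_pos.2 hx
  set c : ℝ := |x|⁻¹ with hc_def
  have hc : 0 < c := inv_pos.2 hx₀
  have hcγ : |x| ^ (-γ) = c ^ γ := by rw [hc_def, Real.inv_rpow hx₀.le, Real.rpow_neg hx₀.le]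
  have hnear := norm_setIntegral_Ioc_mul_exp_neg_I_le hγ₀ hc.le (fun t ht ↦ hG t ht.1)
    (hint.mono_set Ioc_subset_Ioi_self) x
  have hfar : ‖∫ t in Ioi c, G t * Complex.exp (-I * t * x)‖ ≤
      (C + C' / (1 - γ)) * c ^ γ := by
    have hparts := abs_mul_norm_setIntegral_Ioi_mul_exp_neg_I_le_rpow hγ₁ hc
      (fun t ht ↦ hderiv t (hc.trans_le ht)) (hG c hc) (fun t ht ↦ hG' t (hc.trans ht))
      (hint.mono_set (Ioi_subset_Ioi hc.le)) x
    refine le_of_mul_le_mul_left (hparts.trans_eq ?_) hx₀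
    rw [Real.rpow_sub_one hc.ne', hc_def]
    field_simp
  have hsplit : ∫ t in Ioi 0, G t * Complex.exp (-I * t * x) =
      (∫ t in Ioc 0 c, G t * Complex.exp (-I * t * x)) +
        ∫ t in Ioi c, G t * Complex.exp (-I * t * x) := by
    have hint' := integrable_mul_exp_neg_I hint x
    rw [← setIntegral_union (Ioc_disjoint_Ioi le_rfl) measurableSet_Ioi
      (IntegrableOn.mono_set hint' Ioc_subset_Ioi_self)
      (IntegrableOn.mono_set hint' (Ioi_subset_Ioi hc.le)), Ioc_union_Ioi_eq_Ioi hc.le]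
  rw [hsplit, hcγ]
  exact (norm_add_le _ _).trans ((add_le_add hnear hfar).trans_eq (by ring))

end OscillatoryIntegrals

open Asymptotics

section EulerDerivative

/-- `EulerBounded w n F` says that on `(0, ∞)` the function `F` and its iterated Euler derivatives
`(t · d/dt)ᵏ F`, `k ≤ n`, are bounded by constant multiples of the weight `w`. The function `G` in
the recursion is `t · F'(t)`. -/
def EulerBounded (w : ℝ → ℝ) : ℕ → (ℝ → ℂ) → Prop
  | 0, F => F =O[𝓟 (Ioi 0)] w
  | n + 1, F => F =O[𝓟 (Ioi 0)] w ∧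
      ∃ G : ℝ → ℂ, (∀ t, 0 < t → HasDerivAt F (G t / t) t) ∧ EulerBounded w n G

theorem isBigO_principal_Ioi_of_le {E : Type*} [Norm E] {F : ℝ → E} {w : ℝ → ℝ} (C : ℝ)
    (h : ∀ t, 0 < t → ‖F t‖ ≤ C * w t) (hC : 0 ≤ C) : F =O[𝓟 (Ioi 0)] w :=
  isBigO_principal.2 ⟨C, fun t ht ↦ (h t ht).trans
    (mul_le_mul_of_nonneg_left (Real.le_norm_self _) hC)⟩

theorem exists_norm_le_of_isBigO_principal_Ioi {E : Type*} [Norm E] {F : ℝ → E} {w : ℝ → ℝ}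
    (h : F =O[𝓟 (Ioi 0)] w) (hw : ∀ t, 0 < t → 0 ≤ w t) :
    ∃ C, 0 ≤ C ∧ ∀ t, 0 < t → ‖F t‖ ≤ C * w t := by
  obtain ⟨C, hC, hbound⟩ := h.exists_nonneg
  refine ⟨C, hC, fun t ht ↦ ?_⟩
  simpa [abs_of_nonneg (hw t ht)] using isBigOWith_principal.1 hbound t ht

namespace EulerBounded

variable {w w' : ℝ → ℝ} {F F' : ℝ → ℂ} {n : ℕ}

theorem isBigO (hF : EulerBounded w n F) : F =O[𝓟 (Ioi 0)] w := by
  cases n with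
  | zero => exact hF
  | succ n => exact hF.1

theorem of_succ (hF : EulerBounded w (n + 1) F) : EulerBounded w n F := by
  induction n generalizing F with
  | zero => exact hF.1
  | succ n ih =>
    obtain ⟨hbound, G, hderiv, hG⟩ := hF
    exact ⟨hbound, G, hderiv, ih hG⟩

theorem mono (hF : EulerBounded w n F) (hw : w =O[𝓟 (Ioi 0)] w') : EulerBounded w' n F := by
  induction n generalizing F with
  | zero => exact IsBigO.trans hF hw
  | succ n ih =>
    obtain ⟨hbound, G, hderiv, hG⟩ := hF
    exact ⟨hbound.trans hw, G, hderiv, ih hG⟩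

theorem congr (hF : EulerBounded w n F) (h : EqOn F F' (Ioi 0)) : EulerBounded w n F' := by
  have hbound : F' =O[𝓟 (Ioi 0)] w := hF.isBigO.congr' h.eventuallyEq .rfl
  cases n with
  | zero => exact hbound
  | succ n =>
    obtain ⟨-, G, hderiv, hG⟩ := hF
    exact ⟨hbound, G, fun t ht ↦ (hderiv t ht).congr_of_eventuallyEq
      ((h.eventuallyEq_of_mem (Ioi_mem_nhds ht)).symm), hG⟩

theorem const (c : ℂ) : EulerBounded (fun _ ↦ 1) n fun _ ↦ c := by
  induction n generalizing c with
  | zero => exact isBigO_const_const c one_ne_zero _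
  | succ n ih =>
    refine ⟨isBigO_const_const c one_ne_zero _, fun _ ↦ 0, fun t _ ↦ ?_, ih 0⟩
    simpa using hasDerivAt_const t c

theorem add (hF : EulerBounded w n F) (hF' : EulerBounded w n F') :
    EulerBounded w n fun t ↦ F t + F' t := by
  induction n generalizing F F' with
  | zero => exact IsBigO.add hF hF'
  | succ n ih =>
    obtain ⟨hbound, G, hderiv, hG⟩ := hF
    obtain ⟨hbound', G', hderiv', hG'⟩ := hF'
    refine ⟨hbound.add hbound', _, fun t ht ↦ ?_, ih hG hG'⟩
    rw [add_div]
    exact (hderiv t ht).add (hderiv' t ht)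

theorem mul (hF : EulerBounded w n F) (hF' : EulerBounded w' n F') :
    EulerBounded (fun t ↦ w t * w' t) n fun t ↦ F t * F' t := by
  induction n generalizing F F' with
  | zero => exact IsBigO.mul hF hF'
  | succ n ih =>
    have hFn := hF.of_succ
    have hFn' := hF'.of_succ
    obtain ⟨hbound, G, hderiv, hG⟩ := hF
    obtain ⟨hbound', G', hderiv', hG'⟩ := hF'
    refine ⟨hbound.mul hbound', _, fun t ht ↦ ?_, (ih hG hFn').add (ih hFn hG')⟩
    convert! (hderiv t ht).mul (hderiv' t ht) using 1
    ring

theorem const_mul (c : ℂ) (hF : EulerBounded w n F) : EulerBounded w n fun t ↦ c * F t := by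
  simpa using (const c).mul hF

theorem pow (hF : EulerBounded w n F) (k : ℕ) :
    EulerBounded (fun t ↦ w t ^ k) n fun t ↦ F t ^ k := by
  induction k with
  | zero => simpa using const 1
  | succ k ih => simpa only [pow_succ] using ih.mul hF

theorem cexp (hF : EulerBounded w n F) (hw : ∀ t, 0 < t → 0 ≤ w t) :
    EulerBounded (fun t ↦ Real.exp (F t).re * (1 + w t) ^ n) n fun t ↦ Complex.exp (F t) := by
  have hbound (m : ℕ) : (fun t ↦ Complex.exp (F t)) =O[𝓟 (Ioi 0)]
      fun t ↦ Real.exp (F t).re * (1 + w t) ^ m := by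
    refine isBigO_principal_Ioi_of_le 1 (fun t ht ↦ ?_) zero_le_one
    rw [Complex.norm_exp, one_mul]
    exact le_mul_of_one_le_right (by positivity) (one_le_pow₀ (by linarith [hw t ht]))
  induction n with
  | zero => exact hbound 0
  | succ n ih =>
    have hexp := ih hF.of_succ
    obtain ⟨-, G, hderiv, hG⟩ := hF
    refine ⟨hbound _, _, fun t ht ↦ ?_, (hG.mul hexp).mono ?_⟩
    · convert! (hderiv t ht).cexp using 1
      ring
    · refine isBigO_principal_Ioi_of_le 1 (fun t ht ↦ ?_) zero_le_one
      have hwt := hw t ht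
      rw [Real.norm_of_nonneg (by positivity), pow_succ']
      have hle : w t ≤ 1 + w t := by linarith
      calc _ ≤ (1 + w t) * (Real.exp (F t).re * (1 + w t) ^ n) := by gcongr
        _ = _ := by ring

theorem comp_mul_left (hF : EulerBounded w n F) {σ : ℝ} (hσ : 0 < σ) :
    EulerBounded (fun t ↦ w (σ * t)) n fun t ↦ F (σ * t) := by
  have hmaps : Tendsto (fun t ↦ σ * t) (𝓟 (Ioi 0)) (𝓟 (Ioi 0)) :=
    tendsto_principal_principal.2 fun t ht ↦ mul_pos hσ ht
  induction n generalizing F with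
  | zero => exact IsBigO.comp_tendsto hF hmaps
  | succ n ih =>
    obtain ⟨hbound, G, hderiv, hG⟩ := hF
    refine ⟨hbound.comp_tendsto hmaps, _, fun t ht ↦ ?_, ih hG⟩
    have hlin : HasDerivAt (fun t : ℝ ↦ σ * t) σ t := by simpa using (hasDerivAt_id t).const_mul σ
    convert! (hderiv (σ * t) (mul_pos hσ ht)).scomp t hlin using 1
    have hσ' : (σ : ℂ) ≠ 0 := mod_cast hσ.ne'
    rw [Complex.real_smul, Complex.ofReal_mul, mul_div_assoc', mul_div_mul_left _ _ hσ']

theorem rpow (a : ℝ) : EulerBounded (fun t ↦ t ^ a) n fun t ↦ ((t ^ a : ℝ) : ℂ) := by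
  have hbound : (fun t : ℝ ↦ ((t ^ a : ℝ) : ℂ)) =O[𝓟 (Ioi 0)] fun t ↦ t ^ a :=
    isBigO_of_le _ fun t ↦ (Complex.norm_real _).le
  induction n with
  | zero => exact hbound
  | succ n ih =>
    refine ⟨hbound, _, fun t ht ↦ ?_, ih.const_mul a⟩
    convert! (Real.hasDerivAt_rpow_const (.inl (ne_of_gt ht))).ofReal_comp using 1
    rw [Real.rpow_sub_one (ne_of_gt ht)]
    push_cast
    ring

theorem log : EulerBounded (fun t ↦ 1 + |Real.log t|) n fun t ↦ (Real.log t : ℂ) := by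
  have hbound : (fun t ↦ (Real.log t : ℂ)) =O[𝓟 (Ioi 0)] fun t ↦ 1 + |Real.log t| :=
    isBigO_principal_Ioi_of_le 1 (fun t _ ↦ by simp) zero_le_one
  cases n with
  | zero => exact hbound
  | succ n =>
    refine ⟨hbound, fun _ ↦ 1, fun t ht ↦ ?_, (const 1).mono ?_⟩
    · simpa using (Real.hasDerivAt_log (ne_of_gt ht)).ofReal_comp
    · exact isBigO_principal_Ioi_of_le 1 (fun t _ ↦ by simp) zero_le_one

theorem continuousOn (hF : EulerBounded w (n + 1) F) : ContinuousOn F (Ioi 0) := by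
  obtain ⟨-, G, hderiv, -⟩ := hF
  exact fun t ht ↦ (hderiv t ht).continuousAt.continuousWithinAt

end EulerBounded

end EulerDerivative

section Weights

/-- Weight allowing order `γ` at the origin and growth of order `γ + 2` at infinity: it controls the
exponent of the stable characteristic function and its parameter derivatives. -/
noncomputable def growthWeight (γ t : ℝ) : ℝ := t ^ γ * (1 + t) ^ 2

/-- Weight vanishing to order `γ` at the origin and decaying like `t ^ (γ - 2)` at infinity: it
controls the parameter derivatives of the stable characteristic function. -/
noncomputable def decayWeight (γ t : ℝ) : ℝ := t ^ γ / (1 + t) ^ 2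

theorem growthWeight_nonneg (γ : ℝ) {t : ℝ} (ht : 0 < t) : 0 ≤ growthWeight γ t := by
  unfold growthWeight; positivity

theorem decayWeight_nonneg (γ : ℝ) {t : ℝ} (ht : 0 < t) : 0 ≤ decayWeight γ t := by
  unfold decayWeight; positivity

theorem decayWeight_le_rpow (γ : ℝ) {t : ℝ} (ht : 0 < t) : decayWeight γ t ≤ t ^ γ :=
  div_le_self (by positivity) (one_le_pow₀ (by linarith))

theorem rpow_le_growthWeight {γ e t : ℝ} (ht : 0 < t) (h₁ : γ ≤ e) (h₂ : e ≤ γ + 2) :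
    t ^ e ≤ growthWeight γ t := by
  calc t ^ e = t ^ γ * t ^ (e - γ) := by rw [← Real.rpow_add ht, add_sub_cancel]
    _ ≤ t ^ γ * (1 + t) ^ (e - γ) := by gcongr; linarith
    _ ≤ t ^ γ * (1 + t) ^ (2 : ℝ) := by gcongr <;> linarith
    _ = growthWeight γ t := by rw [Real.rpow_two, growthWeight]

theorem integrableOn_decayWeight {γ : ℝ} (h₁ : -1 < γ) (h₂ : γ < 1) :
    IntegrableOn (decayWeight γ) (Ioi 0) := by
  have hmeas (s : Set ℝ) : AEStronglyMeasurable (decayWeight γ) (volume.restrict s) :=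
    Measurable.aestronglyMeasurable (by unfold decayWeight; fun_prop)
  rw [← Ioc_union_Ioi_eq_Ioi zero_le_one]
  refine IntegrableOn.union ?_ ?_
  · refine Integrable.mono' (intervalIntegral.intervalIntegrable_rpow' (a := 0) (b := 1) h₁).1
      (hmeas _) <| (ae_restrict_mem measurableSet_Ioc).mono fun t ht ↦ ?_
    rw [Real.norm_of_nonneg (decayWeight_nonneg γ ht.1)]
    exact decayWeight_le_rpow γ ht.1
  · refine Integrable.mono' (integrableOn_Ioi_rpow_of_lt (a := γ - 2) (by linarith) one_pos)
      (hmeas _) <| (ae_restrict_mem measurableSet_Ioi).mono fun t ht ↦ ?_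
    have ht₀ : 0 < t := one_pos.trans ht
    rw [Real.norm_of_nonneg (decayWeight_nonneg γ ht₀), Real.rpow_sub ht₀, Real.rpow_two,
      decayWeight]
    gcongr
    linarith

theorem one_add_pow_le_mul_exp {y ε : ℝ} (hy : 0 ≤ y) (hε : 0 < ε) (k : ℕ) :
    (1 + y) ^ k ≤ k.factorial / ε ^ k * Real.exp ε * Real.exp (ε * y) := by
  have h := Real.pow_div_factorial_le_exp (ε * (1 + y)) (by positivity) k
  rw [div_le_iff₀ (by positivity), mul_pow, mul_add, mul_one, Real.exp_add] at h
  rw [mul_assoc, div_mul_eq_mul_div, le_div_iff₀ (by positivity)]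
  linarith

theorem exp_mul_abs_log_le {ε s : ℝ} (hs : 0 < s) :
    Real.exp (ε * |Real.log s|) ≤ s ^ ε + s ^ (-ε) := by
  rw [Real.rpow_def_of_pos hs, Real.rpow_def_of_pos hs]
  rcases abs_choice (Real.log s) with h | h <;> rw [h]
  · rw [mul_comm]
    exact le_add_of_nonneg_right (Real.exp_pos _).le
  · rw [mul_neg, ← neg_mul, mul_comm]
    exact le_add_of_nonneg_left (Real.exp_pos _).le

theorem rpow_mul_one_add_abs_log_pow_isBigO_growthWeight {γ a : ℝ} (h₁ : γ < a) (h₂ : a < γ + 2)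
    (k : ℕ) :
    (fun s ↦ s ^ a * (1 + |Real.log s|) ^ k) =O[𝓟 (Ioi 0)] growthWeight γ := by
  obtain ⟨ε, hε, hlo, hhi⟩ : ∃ ε, 0 < ε ∧ γ ≤ a - ε ∧ a + ε ≤ γ + 2 := by
    refine ⟨min (a - γ) (γ + 2 - a), lt_min (by linarith) (by linarith), ?_, ?_⟩
    · linarith [min_le_left (a - γ) (γ + 2 - a)]
    · linarith [min_le_right (a - γ) (γ + 2 - a)]
  set C : ℝ := k.factorial / ε ^ k * Real.exp ε
  refine isBigO_principal_Ioi_of_le (C * 2) (fun s hs ↦ ?_) (by positivity)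
  rw [Real.norm_of_nonneg (by positivity)]
  calc s ^ a * (1 + |Real.log s|) ^ k ≤ s ^ a * (C * (s ^ ε + s ^ (-ε))) := by
        gcongr
        exact (one_add_pow_le_mul_exp (abs_nonneg _) hε k).trans (by
          gcongr; exact exp_mul_abs_log_le hs)
    _ = C * (s ^ (a + ε) + s ^ (a - ε)) := by
        rw [Real.rpow_add hs, sub_eq_add_neg, Real.rpow_add hs]; ring
    _ ≤ C * (growthWeight γ s + growthWeight γ s) := by
        gcongr <;> exact rpow_le_growthWeight hs (by linarith) (by linarith)
    _ = C * 2 * growthWeight γ s := by ring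

theorem exists_one_add_pow_le_mul_exp_rpow {c a : ℝ} (hc : 0 < c) (ha : 0 < a) (N : ℕ) :
    ∃ K, 0 ≤ K ∧ ∀ t, 0 < t → (1 + t) ^ N ≤ K * Real.exp ((c * t) ^ a) := by
  obtain ⟨m, hm⟩ := exists_nat_ge ((N : ℝ) / a)
  rw [div_le_iff₀ ha] at hm
  refine ⟨(1 + c⁻¹) ^ N * 2 ^ N * (1 + m.factorial), by positivity, fun t ht ↦ ?_⟩
  set E := Real.exp ((c * t) ^ a)
  have hE : 1 ≤ E := Real.one_le_exp (by positivity)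
  have hlinear : 1 + t ≤ (1 + c⁻¹) * (2 * max 1 (c * t)) := by
    have hct : t = c⁻¹ * (c * t) := by field_simp
    have h₁ : 1 ≤ max 1 (c * t) := le_max_left _ _
    have h₂ : c⁻¹ * (c * t) ≤ c⁻¹ * max 1 (c * t) := by gcongr; exact le_max_right _ _
    have : 0 ≤ c⁻¹ * max 1 (c * t) := by positivity
    linarith
  have hpow : max 1 (c * t) ^ N ≤ (1 + m.factorial) * E := by
    have hfact : 0 ≤ m.factorial * E := by positivity
    rcases le_total (c * t) 1 with h | h
    · rw [max_eq_left h, one_pow]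
      linarith
    · rw [max_eq_right h]
      calc (c * t) ^ N = (c * t) ^ (N : ℝ) := (Real.rpow_natCast _ _).symm
        _ ≤ (c * t) ^ (a * m) := Real.rpow_le_rpow_of_exponent_le h (by linarith)
        _ = ((c * t) ^ a) ^ m := Real.rpow_mul_natCast (by positivity) _ _
        _ ≤ m.factorial * E := by
            rw [← div_le_iff₀' (by positivity)]
            exact Real.pow_div_factorial_le_exp _ (by positivity) m
        _ ≤ (1 + m.factorial) * E := by linarith
  calc (1 + t) ^ N ≤ ((1 + c⁻¹) * (2 * max 1 (c * t))) ^ N := by gcongr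
    _ = (1 + c⁻¹) ^ N * 2 ^ N * max 1 (c * t) ^ N := by rw [mul_pow, mul_pow]; ring
    _ ≤ (1 + c⁻¹) ^ N * 2 ^ N * ((1 + m.factorial) * E) := by gcongr
    _ = _ := by ring

theorem exp_mul_one_add_pow_mul_growthWeight_isBigO_decayWeight {γ c a : ℝ} (hc : 0 < c)
    (ha : 0 < a) (N : ℕ) :
    (fun t ↦ Real.exp (-(c * t) ^ a) * (1 + t) ^ N * growthWeight γ t) =O[𝓟 (Ioi 0)]
      decayWeight γ := by
  obtain ⟨K, hK, hpow⟩ := exists_one_add_pow_le_mul_exp_rpow hc ha (N + 4)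
  refine isBigO_principal_Ioi_of_le K (fun t ht ↦ ?_) hK
  rw [Real.norm_of_nonneg (by have := growthWeight_nonneg γ ht; positivity), growthWeight,
    decayWeight]
  calc _ = Real.exp (-(c * t) ^ a) * (1 + t) ^ (N + 4) * (t ^ γ / (1 + t) ^ 2) := by
        field_simp
        ring
    _ ≤ Real.exp (-(c * t) ^ a) * (K * Real.exp ((c * t) ^ a)) * (t ^ γ / (1 + t) ^ 2) := by
        gcongr; exact hpow t ht
    _ = K * (t ^ γ / (1 + t) ^ 2) := by
        rw [mul_left_comm, ← Real.exp_add, neg_add_cancel, Real.exp_zero, mul_one]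

end Weights

section EulerBoundedWeights

variable {γ : ℝ} {F P D : ℝ → ℂ}

theorem EulerBounded.rpow_mul_log_pow {a : ℝ} (h₁ : γ < a) (h₂ : a < γ + 2) (k n : ℕ) :
    EulerBounded (growthWeight γ) n fun s ↦ ((s ^ a * Real.log s ^ k : ℝ) : ℂ) := by
  have h := ((EulerBounded.rpow (n := n) a).mul (EulerBounded.log.pow k)).mono
    (rpow_mul_one_add_abs_log_pow_isBigO_growthWeight h₁ h₂ k)
  exact h.congr fun s _ ↦ by push_cast; rfl

theorem growthWeight_comp_mul_isBigO {σ : ℝ} (hσ : 0 < σ) :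
    (fun t ↦ growthWeight γ (σ * t)) =O[𝓟 (Ioi 0)] growthWeight γ := by
  refine isBigO_principal_Ioi_of_le (σ ^ γ * (1 + σ) ^ 2) (fun t ht ↦ ?_) (by positivity)
  rw [Real.norm_of_nonneg (growthWeight_nonneg γ (mul_pos hσ ht)), growthWeight, growthWeight,
    Real.mul_rpow hσ.le ht.le]
  calc σ ^ γ * t ^ γ * (1 + σ * t) ^ 2 ≤ σ ^ γ * t ^ γ * ((1 + σ) * (1 + t)) ^ 2 := by
        gcongr; linarith [mul_pos hσ ht]
    _ = _ := by ring

theorem EulerBounded.cexp_mul {c a : ℝ} {n : ℕ} (hγ₀ : 0 ≤ γ) (hγ₁ : γ ≤ 1)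
    (hc : 0 < c) (ha : 0 < a)
    (hP : EulerBounded (growthWeight γ) n P) (hD : EulerBounded (growthWeight γ) n D)
    (hre : ∀ t, 0 < t → (P t).re = -(c * t) ^ a) :
    EulerBounded (decayWeight γ) n fun t ↦ Complex.exp (P t) * D t := by
  refine ((hP.cexp fun t ↦ growthWeight_nonneg γ).mul hD).mono (IsBigO.trans ?_
    (exp_mul_one_add_pow_mul_growthWeight_isBigO_decayWeight hc ha (3 * n)))
  refine isBigO_principal_Ioi_of_le (2 ^ n) (fun t ht ↦ ?_) (by positivity)
  have hw := growthWeight_nonneg γ ht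
  have hrpow : t ^ γ ≤ 1 + t :=
    (Real.rpow_le_rpow ht.le (by linarith) hγ₀).trans
      (Real.rpow_le_self_of_one_le (by linarith) hγ₁)
  have hgrowth : 1 + growthWeight γ t ≤ 2 * (1 + t) ^ 3 := by
    have hone : 1 ≤ (1 + t) ^ 3 := one_le_pow₀ (by linarith)
    calc 1 + growthWeight γ t ≤ (1 + t) ^ 3 + (1 + t) * (1 + t) ^ 2 := by
          unfold growthWeight; gcongr
      _ = 2 * (1 + t) ^ 3 := by ring
  rw [Real.norm_of_nonneg (by positivity), hre t ht]
  calc _ ≤ Real.exp (-(c * t) ^ a) * (2 * (1 + t) ^ 3) ^ n * growthWeight γ t := by gcongr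
    _ = _ := by rw [mul_pow, ← pow_mul]; ring

end EulerBoundedWeights

section Decay

variable {γ : ℝ} {F : ℝ → ℂ}

theorem integrableOn_of_isBigO_decayWeight (h₁ : -1 < γ) (h₂ : γ < 1)
    (hF : F =O[𝓟 (Ioi 0)] decayWeight γ) (hcont : ContinuousOn F (Ioi 0)) :
    IntegrableOn F (Ioi 0) := by
  obtain ⟨C, -, hC⟩ :=
    exists_norm_le_of_isBigO_principal_Ioi hF fun t ht ↦ decayWeight_nonneg γ ht
  exact ((integrableOn_decayWeight h₁ h₂).const_mul C).mono'
    (hcont.aestronglyMeasurable measurableSet_Ioi)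
    ((ae_restrict_mem measurableSet_Ioi).mono hC)

theorem tendsto_zero_nhdsGT_of_isBigO_decayWeight (hγ : 0 < γ)
    (hF : F =O[𝓟 (Ioi 0)] decayWeight γ) :
    Tendsto F (𝓝[>] 0) (𝓝 0) := by
  obtain ⟨C, hC, hbound⟩ :=
    exists_norm_le_of_isBigO_principal_Ioi hF fun t ht ↦ decayWeight_nonneg γ ht
  have hlim : Tendsto (fun t : ℝ ↦ C * t ^ γ) (𝓝[>] 0) (𝓝 0) := by
    have h := ((Real.continuous_rpow_const hγ.le).const_mul C).tendsto 0
    rw [Real.zero_rpow hγ.ne', mul_zero] at h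
    exact h.mono_left nhdsWithin_le_nhds
  refine squeeze_zero_norm' ?_ hlim
  filter_upwards [self_mem_nhdsWithin] with t ht
  exact (hbound t ht).trans (by gcongr; exact decayWeight_le_rpow γ ht)

theorem hasDerivAt_div_ofReal {G : ℝ → ℂ} {H : ℂ} {t : ℝ} (ht : t ≠ 0)
    (hG : HasDerivAt G (H / t) t) :
    HasDerivAt (fun t : ℝ ↦ G t / t) ((H - G t) / t ^ 2) t := by
  have htc : (t : ℂ) ≠ 0 := mod_cast ht
  convert! hG.div (hasDerivAt_id t).ofReal_comp htc using 1
  simp [htc]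

theorem norm_div_ofReal_le_of_le_decayWeight {z : ℂ} {C t : ℝ} (ht : 0 < t)
    (hz : ‖z‖ ≤ C * decayWeight γ t) : ‖z / t‖ ≤ C * decayWeight (γ - 1) t := by
  rw [norm_div, Complex.norm_real, Real.norm_of_nonneg ht.le, div_le_iff₀ ht]
  refine hz.trans_eq ?_
  rw [decayWeight, decayWeight, Real.rpow_sub_one ht.ne']
  field_simp

theorem EulerBounded.integrableOn_div (hγ₀ : 0 < γ) (hγ₁ : γ < 1)
    (hF : EulerBounded (decayWeight γ) 1 F) : IntegrableOn (fun t : ℝ ↦ F t / t) (Ioi 0) := by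
  obtain ⟨C, hC, hbound⟩ :=
    exists_norm_le_of_isBigO_principal_Ioi hF.isBigO fun t ht ↦ decayWeight_nonneg γ ht
  exact integrableOn_of_isBigO_decayWeight (γ := γ - 1) (by linarith) (by linarith)
    (isBigO_principal_Ioi_of_le C
      (fun t ht ↦ norm_div_ofReal_le_of_le_decayWeight ht (hbound t ht)) hC)
    (hF.continuousOn.div (by fun_prop) fun t ht ↦ mod_cast ne_of_gt ht)

theorem EulerBounded.exists_norm_setIntegral_div_le (hγ₀ : 0 < γ) (hγ₁ : γ < 1)
    (hF : EulerBounded (decayWeight γ) 1 F) :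
    ∃ K, ∀ x : ℝ, x ≠ 0 →
      ‖∫ t in Ioi 0, F t / t * Complex.exp (-I * t * x)‖ ≤ K * |x| ^ (-γ) := by
  have hint := hF.integrableOn_div hγ₀ hγ₁
  obtain ⟨hFbound, G, hderiv, hG⟩ := hF
  obtain ⟨C, hC, hF⟩ :=
    exists_norm_le_of_isBigO_principal_Ioi hFbound fun t ht ↦ decayWeight_nonneg γ ht
  obtain ⟨C', hC', hG⟩ :=
    exists_norm_le_of_isBigO_principal_Ioi hG.isBigO fun t ht ↦ decayWeight_nonneg γ ht
  have hderivBound (t : ℝ) (ht : 0 < t) :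
      ‖(G t - F t) / (t : ℂ) ^ 2‖ ≤ (C' + C) * t ^ (γ - 2) := by
    rw [norm_div, norm_pow, Complex.norm_real, Real.norm_of_nonneg ht.le, Real.rpow_sub ht,
      Real.rpow_two, ← mul_div_assoc]
    gcongr
    calc ‖G t - F t‖ ≤ ‖G t‖ + ‖F t‖ := norm_sub_le _ _
      _ ≤ C' * decayWeight γ t + C * decayWeight γ t := add_le_add (hG t ht) (hF t ht)
      _ = (C' + C) * decayWeight γ t := by ring
      _ ≤ (C' + C) * t ^ γ := by gcongr; exact decayWeight_le_rpow γ ht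
  exact ⟨C / γ + (C + (C' + C) / (1 - γ)), fun x hx ↦
    norm_setIntegral_Ioi_mul_exp_neg_I_le hγ₀ hγ₁
      (fun t ht ↦ hasDerivAt_div_ofReal ht.ne' (hderiv t ht))
      (fun t ht ↦ (norm_div_ofReal_le_of_le_decayWeight ht (hF t ht)).trans
        (by gcongr; exact decayWeight_le_rpow _ ht))
      hderivBound hint hx⟩

theorem EulerBounded.exists_abs_mul_norm_setIntegral_le (hγ₀ : 0 < γ) (hγ₁ : γ < 1)
    (hF : EulerBounded (decayWeight γ) 2 F) :
    ∃ K, ∀ x : ℝ, x ≠ 0 →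
      |x| * ‖∫ t in Ioi 0, F t * Complex.exp (-I * t * x)‖ ≤ K * |x| ^ (-γ) := by
  have hcont := hF.continuousOn
  obtain ⟨hbound, G, hderiv, hG⟩ := hF
  obtain ⟨K, hK⟩ := hG.exists_norm_setIntegral_div_le hγ₀ hγ₁
  refine ⟨K, fun x hx ↦ le_trans ?_ (hK x hx)⟩
  simpa using abs_mul_norm_setIntegral_Ioi_mul_exp_neg_I_le hderiv
    (integrableOn_of_isBigO_decayWeight (by linarith) hγ₁ hbound hcont)
    (hG.integrableOn_div hγ₀ hγ₁) (tendsto_zero_nhdsGT_of_isBigO_decayWeight hγ₀ hbound) x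

theorem EulerBounded.exists_norm_setIntegral_le (hγ₀ : 0 < γ) (hγ₁ : γ < 1)
    (hF : EulerBounded (decayWeight γ) 2 F) :
    ∃ K, 0 ≤ K ∧ ∀ x : ℝ,
      ‖∫ t in Ioi 0, F t * Complex.exp (-I * t * x)‖ ≤ K * (1 + |x|) ^ (-1 - γ) := by
  obtain ⟨K, hK⟩ := hF.exists_abs_mul_norm_setIntegral_le hγ₀ hγ₁
  set M := ∫ t in Ioi 0, ‖F t‖
  have : 0 ≤ M := integral_nonneg fun t ↦ norm_nonneg _
  refine ⟨max M K * 2 ^ (1 + γ), by positivity, fun x ↦ ?_⟩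
  have hscale : 2 ^ (1 + γ) * (1 + |x|) ^ (-1 - γ) = ((1 + |x|) / 2) ^ (-1 - γ) := by
    rw [Real.div_rpow (by positivity) zero_le_two, ← neg_add', Real.rpow_neg zero_le_two,
      div_inv_eq_mul, mul_comm]
  rw [mul_assoc, hscale]
  rcases le_or_gt |x| 1 with hx | hx
  · refine (norm_integral_mul_exp_neg_I_le F x).trans ((le_max_left M K).trans ?_)
    exact le_mul_of_one_le_right (by positivity)
      (Real.one_le_rpow_of_pos_of_le_one_of_nonpos (by positivity) (by linarith) (by linarith))
  · have hx₀ : 0 < |x| := by linarith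
    calc _ ≤ K * |x| ^ (-γ) / |x| := (le_div_iff₀' hx₀).2 (hK x (abs_pos.1 hx₀))
      _ = K * |x| ^ (-1 - γ) := by
          rw [← neg_add', add_comm, neg_add', Real.rpow_sub_one hx₀.ne', mul_div_assoc]
      _ ≤ max M K * ((1 + |x|) / 2) ^ (-1 - γ) := by
          refine mul_le_mul (le_max_right _ _) ?_ (by positivity) (by positivity)
          exact Real.rpow_le_rpow_of_nonpos (by positivity) (by linarith) (by linarith)

end Decay

section RemovableSingularities

theorem hasDerivAt_integral_comp_mul {k k' : ℝ → ℝ} (hk : ∀ y, HasDerivAt k (k' y) y)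
    (hk' : Continuous k') (y : ℝ) :
    HasDerivAt (fun y ↦ ∫ r in (0 : ℝ)..1, k (r * y)) (∫ r in (0 : ℝ)..1, r * k' (r * y)) y := by
  have hkc : Continuous k := continuous_iff_continuousAt.2 fun y ↦ (hk y).continuousAt
  obtain ⟨B, hB⟩ := (isCompact_closedBall (0 : ℝ) (|y| + 1)).exists_bound_of_continuousOn
    hk'.continuousOn
  refine (intervalIntegral.hasDerivAt_integral_of_dominated_loc_of_deriv_le (μ := volume)
    (F := fun y r ↦ k (r * y)) (F' := fun y r ↦ r * k' (r * y)) (bound := fun _ ↦ B)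
    (Metric.ball_mem_nhds y one_pos) (.of_forall fun z ↦ ?_) ?_ ?_ (.of_forall fun r hr z hz ↦ ?_)
    intervalIntegrable_const (.of_forall fun r _ z _ ↦ ?_)).2
  · exact Continuous.aestronglyMeasurable (by fun_prop)
  · exact Continuous.intervalIntegrable (by fun_prop) _ _
  · exact Continuous.aestronglyMeasurable (by fun_prop)
  · rw [uIoc_of_le zero_le_one] at hr
    have hz' : |z| ≤ |y| + 1 := by
      rw [Metric.mem_ball, Real.dist_eq] at hz
      linarith [abs_sub_abs_le_abs_sub z y]
    have hrz : r * z ∈ Metric.closedBall (0 : ℝ) (|y| + 1) := by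
      rw [mem_closedBall_zero_iff, norm_mul, Real.norm_of_nonneg hr.1.le]
      exact (mul_le_of_le_one_left (norm_nonneg z) hr.2).trans hz'
    rw [norm_mul, Real.norm_of_nonneg hr.1.le]
    exact (mul_le_of_le_one_left (norm_nonneg _) hr.2).trans (hB _ hrz)
  · convert! (hk (r * z)).comp z ((hasDerivAt_id z).const_mul r) using 1
    ring

/-- The continuous extension of `y ↦ (exp y - 1) / y`. -/
noncomputable def expSlope (y : ℝ) : ℝ := ∫ r in (0 : ℝ)..1, Real.exp (r * y)

/-- The derivative of `expSlope`, obtained under the integral sign. -/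
noncomputable def expSlopeDeriv (y : ℝ) : ℝ := ∫ r in (0 : ℝ)..1, r * Real.exp (r * y)

theorem hasDerivAt_expSlope (y : ℝ) : HasDerivAt expSlope (expSlopeDeriv y) y :=
  hasDerivAt_integral_comp_mul Real.hasDerivAt_exp Real.continuous_exp y

theorem mul_expSlope (y : ℝ) : y * expSlope y = Real.exp y - 1 := by
  rw [expSlope, intervalIntegral.mul_integral_comp_mul_right, integral_exp]
  simp

theorem expSlope_zero : expSlope 0 = 1 := by simp [expSlope]

theorem expSlope_ne_zero (y : ℝ) : expSlope y ≠ 0 := by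
  rcases eq_or_ne y 0 with rfl | hy
  · simp [expSlope_zero]
  · refine right_ne_zero_of_mul (a := y) ?_
    rw [mul_expSlope, sub_ne_zero, Ne, Real.exp_eq_one_iff]
    exact hy

theorem expSlopeDeriv_zero : expSlopeDeriv 0 = 1 / 2 := by simp [expSlopeDeriv]

theorem expSlope_add_mul_expSlopeDeriv (y : ℝ) :
    expSlope y + y * expSlopeDeriv y = Real.exp y := by
  have hprod := (hasDerivAt_id y).mul (hasDerivAt_expSlope y)
  have hexp : HasDerivAt (id * expSlope) (Real.exp y) y := by
    have heq : id * expSlope = fun y ↦ Real.exp y - 1 := funext mul_expSlope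
    exact heq ▸ (Real.hasDerivAt_exp y).sub_const 1
  simpa using hprod.unique hexp

theorem exp_mul_le_one_add_exp {r : ℝ} (hr : r ∈ Icc 0 1) (y : ℝ) :
    Real.exp (r * y) ≤ 1 + Real.exp y := by
  have h := convexOn_exp.2 (mem_univ 0) (mem_univ y) (sub_nonneg.2 hr.2) hr.1 (sub_add_cancel 1 r)
  simp only [smul_eq_mul, mul_zero, zero_add, Real.exp_zero, mul_one] at h
  have := mul_le_of_le_one_left (Real.exp_pos y).le hr.2
  linarith [hr.1]

theorem abs_expSlope_le (y : ℝ) : |expSlope y| ≤ 1 + Real.exp y := by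
  have h := intervalIntegral.norm_integral_le_of_norm_le_const (a := 0) (b := 1)
    (f := fun r ↦ Real.exp (r * y)) (C := 1 + Real.exp y) fun r hr ↦ by
      rw [uIoc_of_le zero_le_one] at hr
      rw [Real.norm_of_nonneg (Real.exp_pos _).le]
      exact exp_mul_le_one_add_exp (Ioc_subset_Icc_self hr) y
  simpa [expSlope] using h

theorem abs_expSlopeDeriv_le (y : ℝ) : |expSlopeDeriv y| ≤ 1 + Real.exp y := by
  have h := intervalIntegral.norm_integral_le_of_norm_le_const (a := 0) (b := 1)
    (f := fun r ↦ r * Real.exp (r * y)) (C := 1 + Real.exp y) fun r hr ↦ by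
      rw [uIoc_of_le zero_le_one] at hr
      rw [Real.norm_of_nonneg (mul_nonneg hr.1.le (Real.exp_pos _).le)]
      exact (mul_le_of_le_one_left (Real.exp_pos _).le hr.2).trans
        (exp_mul_le_one_add_exp (Ioc_subset_Icc_self hr) y)
  simpa [expSlopeDeriv] using h

theorem analyticAt_dslope {f : ℝ → ℝ} (hf : ∀ y, AnalyticAt ℝ f y) (a y : ℝ) :
    AnalyticAt ℝ (dslope f a) y := by
  rcases eq_or_ne y a with rfl | hy
  · obtain ⟨p, hp⟩ := hf y
    exact hp.has_fpower_series_dslope_fslope.analyticAt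
  · have hslope : AnalyticAt ℝ (fun z ↦ (z - a)⁻¹ • (f z - f a)) y :=
      (analyticAt_id.sub analyticAt_const).inv (sub_ne_zero.2 hy) |>.smul
        ((hf y).sub analyticAt_const)
    refine hslope.congr ?_
    filter_upwards [eventually_ne_nhds hy] with z hz
    rw [dslope_of_ne f hz, slope, vsub_eq_sub]

theorem mul_sinc (y : ℝ) : y * Real.sinc y = Real.sin y := by
  rcases eq_or_ne y 0 with rfl | hy
  · simp
  · rw [Real.sinc_of_ne_zero hy, mul_div_cancel₀ _ hy]

theorem sinc_pos {y : ℝ} (hy : |y| < π) : 0 < Real.sinc y := by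
  rcases eq_or_ne y 0 with rfl | hy₀
  · simp
  · rw [abs_lt] at hy
    rw [Real.sinc_of_ne_zero hy₀]
    rcases hy₀.lt_or_gt with h | h
    · exact div_pos_of_neg_of_neg (Real.sin_neg_of_neg_of_neg_pi_lt h hy.1) h
    · exact div_pos (Real.sin_pos_of_pos_of_lt_pi h hy.2) h

/-- The continuous extension to `a = 1` of `a ↦ (1 - a) tan (π a / 2)`. -/
noncomputable def tanFactor (a : ℝ) : ℝ :=
  2 / π * (Real.cos (π / 2 * (a - 1)) / Real.sinc (π / 2 * (a - 1)))

theorem abs_pi_div_two_mul_sub_one_lt {a : ℝ} (ha : a ∈ Ioo 0 2) : |π / 2 * (a - 1)| < π / 2 := by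
  rw [abs_mul, abs_of_pos Real.pi_div_two_pos]
  refine mul_lt_of_lt_one_right Real.pi_div_two_pos (abs_lt.2 ⟨?_, ?_⟩) <;> linarith [ha.1, ha.2]

theorem sinc_pi_div_two_mul_sub_one_pos {a : ℝ} (ha : a ∈ Ioo 0 2) :
    0 < Real.sinc (π / 2 * (a - 1)) :=
  sinc_pos ((abs_pi_div_two_mul_sub_one_lt ha).trans (by linarith [Real.pi_pos]))

theorem tanFactor_one : tanFactor 1 = 2 / π := by simp [tanFactor]

theorem tanFactor_ne_zero {a : ℝ} (ha : a ∈ Ioo 0 2) : tanFactor a ≠ 0 := by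
  have hcos : 0 < Real.cos (π / 2 * (a - 1)) :=
    Real.cos_pos_of_mem_Ioo (abs_lt.1 (abs_pi_div_two_mul_sub_one_lt ha))
  have := sinc_pi_div_two_mul_sub_one_pos ha
  unfold tanFactor
  positivity

theorem sub_one_mul_tan {a : ℝ} (ha : a ∈ Ioo 0 2) (h : a ≠ 1) :
    (a - 1) * Real.tan (π * a / 2) = -tanFactor a := by
  have := (sinc_pi_div_two_mul_sub_one_pos ha).ne'
  rw [show π * a / 2 = π / 2 * (a - 1) + π / 2 by ring, Real.tan_eq_sin_div_cos,
    Real.sin_add_pi_div_two, Real.cos_add_pi_div_two, ← mul_sinc, tanFactor]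
  have h' : a - 1 ≠ 0 := sub_ne_zero.2 h
  field_simp

theorem analyticAt_tanFactor {a : ℝ} (ha : a ∈ Ioo 0 2) : AnalyticAt ℝ tanFactor a := by
  have hlin : AnalyticAt ℝ (fun a ↦ π / 2 * (a - 1)) a := by fun_prop
  have hsinc : AnalyticAt ℝ (fun a ↦ Real.sinc (π / 2 * (a - 1))) a := by
    rw [Real.sinc_eq_dslope]
    exact (analyticAt_dslope (fun y ↦ Real.analyticAt_sin) 0 _).comp hlin
  exact analyticAt_const.mul
    ((Real.analyticAt_cos.comp hlin).div hsinc (sinc_pi_div_two_mul_sub_one_pos ha).ne')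

theorem hasDerivAt_tanFactor {a : ℝ} (ha : a ∈ Ioo 0 2) :
    HasDerivAt tanFactor (deriv tanFactor a) a :=
  (analyticAt_tanFactor ha).differentiableAt.hasDerivAt

theorem eventually_abs_tanFactor_le {a : ℝ} (ha : a ∈ Ioo 0 2) :
    ∃ K, ∀ᶠ b in 𝓝 a, |tanFactor b| ≤ K ∧ |deriv tanFactor b| ≤ K := by
  have hcont := (analyticAt_tanFactor ha).continuousAt.abs
  have hcont' := (analyticAt_tanFactor ha).deriv.continuousAt.abs
  refine ⟨max (|tanFactor a| + 1) (|deriv tanFactor a| + 1), ?_⟩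
  filter_upwards [hcont.eventually_lt_const (lt_add_one _),
    hcont'.eventually_lt_const (lt_add_one _)] with b h h'
  exact ⟨h.le.trans (le_max_left _ _), h'.le.trans (le_max_right _ _)⟩

end RemovableSingularities

section RpowSlope

/-- The continuous extension to `a = 1` of `a ↦ (s ^ a - s) / (a - 1)`, for `0 < s`. -/
noncomputable def rpowSlope (a s : ℝ) : ℝ := s * Real.log s * expSlope ((a - 1) * Real.log s)

/-- The derivative of `rpowSlope` in the exponent. -/
noncomputable def rpowSlopeDeriv (a s : ℝ) : ℝ :=
  s * Real.log s ^ 2 * expSlopeDeriv ((a - 1) * Real.log s)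

variable {s : ℝ}

theorem mul_exp_sub_one_mul_log (hs : 0 < s) (a : ℝ) :
    s * Real.exp ((a - 1) * Real.log s) = s ^ a := by
  rw [mul_comm (a - 1), ← Real.rpow_def_of_pos hs, Real.rpow_sub_one hs.ne',
    mul_div_cancel₀ _ hs.ne']

theorem sub_one_mul_rpowSlope (hs : 0 < s) (a : ℝ) : (a - 1) * rpowSlope a s = s ^ a - s := by
  rw [rpowSlope]
  linear_combination s * mul_expSlope ((a - 1) * Real.log s) + mul_exp_sub_one_mul_log hs a

theorem rpowSlope_add_sub_one_mul_rpowSlopeDeriv (hs : 0 < s) (a : ℝ) :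
    rpowSlope a s + (a - 1) * rpowSlopeDeriv a s = s ^ a * Real.log s := by
  rw [rpowSlope, rpowSlopeDeriv]
  linear_combination (s * Real.log s) * expSlope_add_mul_expSlopeDeriv ((a - 1) * Real.log s) +
    Real.log s * mul_exp_sub_one_mul_log hs a

theorem hasDerivAt_rpowSlope_left (a s : ℝ) :
    HasDerivAt (fun a ↦ rpowSlope a s) (rpowSlopeDeriv a s) a := by
  have hlin : HasDerivAt (fun a ↦ (a - 1) * Real.log s) (Real.log s) a := by
    simpa using ((hasDerivAt_id a).sub_const 1).mul_const (Real.log s)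
  convert! ((hasDerivAt_expSlope _).comp a hlin).const_mul (s * Real.log s) using 1
  rw [rpowSlopeDeriv]
  ring

theorem hasDerivAt_rpowSlope_right (hs : 0 < s) (a : ℝ) :
    HasDerivAt (rpowSlope a) ((rpowSlope a s + s ^ a) / s) s := by
  have hlog := Real.hasDerivAt_log hs.ne'
  convert! ((hasDerivAt_id s).mul hlog).mul
    ((hasDerivAt_expSlope _).comp s (hlog.const_mul (a - 1))) using 1
  rw [← mul_exp_sub_one_mul_log hs a, ← expSlope_add_mul_expSlopeDeriv, rpowSlope]
  simp only [id, Function.comp_apply, Pi.mul_apply]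
  field_simp
  ring

/-- A common majorant of `s`, `s ^ a`, `s ^ a * log s`, `rpowSlope a s` and `rpowSlopeDeriv a s`. -/
noncomputable def rpowLogMajorant (a s : ℝ) : ℝ := (s + s ^ a) * (1 + |Real.log s|) ^ 2

theorem mul_le_rpowLogMajorant {c : ℝ} (hs : 0 < s) (a : ℝ) (hc : c ≤ (1 + |Real.log s|) ^ 2) :
    c * (s + s ^ a) ≤ rpowLogMajorant a s := by
  rw [rpowLogMajorant, mul_comm]
  gcongr

theorem add_rpow_le_rpowLogMajorant (hs : 0 < s) (a : ℝ) : s + s ^ a ≤ rpowLogMajorant a s := by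
  simpa using mul_le_rpowLogMajorant hs a (one_le_pow₀ (by linarith [abs_nonneg (Real.log s)]))

theorem le_rpowLogMajorant (hs : 0 < s) (a : ℝ) : s ≤ rpowLogMajorant a s :=
  (le_add_of_nonneg_right (by positivity)).trans (add_rpow_le_rpowLogMajorant hs a)

theorem abs_log_mul_add_rpow_le_rpowLogMajorant (hs : 0 < s) (a : ℝ) :
    |Real.log s| * (s + s ^ a) ≤ rpowLogMajorant a s :=
  mul_le_rpowLogMajorant hs a (by nlinarith [abs_nonneg (Real.log s)])

theorem abs_rpow_le_rpowLogMajorant (hs : 0 < s) (a : ℝ) : |s ^ a| ≤ rpowLogMajorant a s := by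
  rw [abs_of_pos (by positivity)]
  exact (le_add_of_nonneg_left hs.le).trans (add_rpow_le_rpowLogMajorant hs a)

theorem abs_rpow_mul_log_le_rpowLogMajorant (hs : 0 < s) (a : ℝ) :
    |s ^ a * Real.log s| ≤ rpowLogMajorant a s := by
  rw [abs_mul, mul_comm, abs_of_pos (a := s ^ a) (by positivity)]
  refine le_trans ?_ (abs_log_mul_add_rpow_le_rpowLogMajorant hs a)
  gcongr
  exact le_add_of_nonneg_left hs.le

theorem abs_rpowSlope_le_rpowLogMajorant (hs : 0 < s) (a : ℝ) :
    |rpowSlope a s| ≤ rpowLogMajorant a s := by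
  refine le_trans ?_ (abs_log_mul_add_rpow_le_rpowLogMajorant hs a)
  rw [rpowSlope, ← mul_exp_sub_one_mul_log hs a, abs_mul, abs_mul, abs_of_pos hs]
  calc _ ≤ s * |Real.log s| * (1 + Real.exp ((a - 1) * Real.log s)) := by
        gcongr
        exact abs_expSlope_le _
    _ = _ := by ring

theorem abs_rpowSlopeDeriv_le_rpowLogMajorant (hs : 0 < s) (a : ℝ) :
    |rpowSlopeDeriv a s| ≤ rpowLogMajorant a s := by
  have hlog : Real.log s ^ 2 ≤ (1 + |Real.log s|) ^ 2 := by
    rw [← sq_abs]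
    gcongr
    exact le_add_of_nonneg_left zero_le_one
  refine le_trans ?_ (mul_le_rpowLogMajorant hs a hlog)
  rw [rpowSlopeDeriv, ← mul_exp_sub_one_mul_log hs a, abs_mul, abs_mul, abs_of_pos hs, abs_sq]
  calc _ ≤ s * Real.log s ^ 2 * (1 + Real.exp ((a - 1) * Real.log s)) := by
        gcongr
        exact abs_expSlopeDeriv_le _
    _ = _ := by ring

variable {γ a : ℝ}

theorem EulerBounded.ofReal_rpowSlope (hγ₁ : -1 < γ) (hγ₂ : γ < 1) (hγa : γ < a) (ha : a < γ + 2)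
    (n : ℕ) :
    EulerBounded (growthWeight γ) n fun s ↦ (rpowSlope a s : ℂ) := by
  have hγ' : 1 < γ + 2 := by linarith
  rcases eq_or_ne a 1 with rfl | h
  · refine (EulerBounded.rpow_mul_log_pow hγ₂ hγ' 1 n).congr fun s _ ↦ ?_
    simp [rpowSlope, expSlope_zero]
  · have hcomb := ((EulerBounded.rpow_mul_log_pow hγa ha 0 n).add
      ((EulerBounded.rpow_mul_log_pow hγ₂ hγ' 0 n).const_mul (-1))).const_mul ((a - 1)⁻¹ : ℝ)
    refine hcomb.congr fun s hs ↦ ?_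
    have hslope : rpowSlope a s = (a - 1)⁻¹ * (s ^ a + -1 * s) := by
      rw [eq_inv_mul_iff_mul_eq₀ (sub_ne_zero.2 h), sub_one_mul_rpowSlope hs]
      ring
    simp [hslope]

theorem EulerBounded.ofReal_rpowSlopeDeriv (hγ₁ : -1 < γ) (hγ₂ : γ < 1) (hγa : γ < a)
    (ha : a < γ + 2) (n : ℕ) :
    EulerBounded (growthWeight γ) n fun s ↦ (rpowSlopeDeriv a s : ℂ) := by
  have hγ' : 1 < γ + 2 := by linarith
  rcases eq_or_ne a 1 with rfl | h
  · refine ((EulerBounded.rpow_mul_log_pow hγ₂ hγ' 2 n).const_mul (1 / 2)).congr fun s _ ↦ ?_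
    simp only [one_div, Real.rpow_one, Complex.ofReal_mul, Complex.ofReal_pow, rpowSlopeDeriv,
      sub_self, zero_mul, expSlopeDeriv_zero, Complex.ofReal_inv, Complex.ofReal_ofNat]
    ring
  · have hcomb := ((EulerBounded.rpow_mul_log_pow hγa ha 1 n).add
      ((EulerBounded.ofReal_rpowSlope hγ₁ hγ₂ hγa ha n).const_mul (-1))).const_mul ((a - 1)⁻¹ : ℝ)
    refine hcomb.congr fun s hs ↦ ?_
    have hslope : rpowSlopeDeriv a s =
        (a - 1)⁻¹ * (s ^ a * Real.log s + -1 * rpowSlope a s) := by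
      rw [eq_inv_mul_iff_mul_eq₀ (sub_ne_zero.2 h), ← rpowSlope_add_sub_one_mul_rpowSlopeDeriv hs]
      ring
    simp [hslope]

end RpowSlope

section ParameterDerivatives

variable {θ : Fin 4 → ℝ} {t : ℝ}

theorem psiM_of_pos (hθ : θ ∈ ThetaInt) (ht : 0 < t) :
    psiM θ t = -((θ 1 * t) ^ θ 2 : ℝ) -
      (θ 3 * tanFactor (θ 2) * rpowSlope (θ 2) (θ 1 * t) : ℝ) * I + (θ 0 * t : ℝ) * I := by
  have hz : 0 < θ 1 * t := mul_pos hθ.1 ht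
  by_cases h : θ 2 = 1
  · rw [psiM_of_pos_of_eq_one hθ.1 h ht, h, tanFactor_one, rpowSlope, sub_self, zero_mul,
      expSlope_zero, Real.rpow_one, Real.log_mul hθ.1.ne' ht.ne', mul_one]
    push_cast
    ring
  · rw [psiM_of_pos_of_ne_one hθ.1 h ht, ← neg_neg (tanFactor (θ 2)), ← sub_one_mul_tan hθ.2.1 h]
    rw [eq_add_of_sub_eq (sub_one_mul_rpowSlope hz (θ 2)).symm]
    push_cast
    ring

/-- The derivative of `psiM θ t` in the parameter `θ i`, for `0 < t`. -/
noncomputable def psiDeriv (θ : Fin 4 → ℝ) (t : ℝ) : Fin 4 → ℂ :=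
  let z := θ 1 * t
  let W := rpowSlope (θ 2) z
  ![t * I,
    -(θ 2 * z ^ θ 2 / θ 1 : ℝ) - (θ 3 * tanFactor (θ 2) * (W + z ^ θ 2) / θ 1 : ℝ) * I,
    -(z ^ θ 2 * Real.log z : ℝ) - (θ 3 *
      (deriv tanFactor (θ 2) * W + tanFactor (θ 2) * rpowSlopeDeriv (θ 2) z) : ℝ) * I,
    -(tanFactor (θ 2) * W : ℝ) * I]

theorem isOpen_ThetaInt : IsOpen ThetaInt := by
  have h (i : Fin 4) : Continuous fun θ : Fin 4 → ℝ ↦ θ i := continuous_apply i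
  exact (isOpen_Ioi.preimage (h 1)).inter
    ((isOpen_Ioo.preimage (h 2)).inter (isOpen_Ioo.preimage (h 3)))

theorem eventually_update {p : (Fin 4 → ℝ) → Prop} (hp : ∀ᶠ θ' in 𝓝 θ, p θ') (i : Fin 4) :
    ∀ᶠ s in 𝓝 (θ i), p (Function.update θ i s) := by
  have hcont : Continuous fun s ↦ Function.update θ i s := by fun_prop
  exact hcont.continuousAt.eventually (by simpa using hp)

theorem hasDerivAt_psiM_update (hθ : θ ∈ ThetaInt) (ht : 0 < t) (i : Fin 4) :
    HasDerivAt (fun s ↦ psiM (Function.update θ i s) t) (psiDeriv θ t i) (θ i) := by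
  have heq : (fun s ↦ psiM (Function.update θ i s) t) =ᶠ[𝓝 (θ i)] _ :=
    (eventually_update (isOpen_ThetaInt.mem_nhds hθ) i).mono fun s hs ↦ psiM_of_pos hs ht
  have hz : 0 < θ 1 * t := mul_pos hθ.1 ht
  refine HasDerivAt.congr_of_eventuallyEq ?_ heq
  fin_cases i
  · have hloc := ((hasDerivAt_mul_const (x := θ 0) t).ofReal_comp.mul_const I).const_add
      (-((θ 1 * t) ^ θ 2 : ℝ) - (θ 3 * tanFactor (θ 2) * rpowSlope (θ 2) (θ 1 * t) : ℝ) * I : ℂ)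
    simpa [psiDeriv] using hloc
  · have hlin : HasDerivAt (fun s ↦ s * t) t (θ 1) := hasDerivAt_mul_const t
    have hpow : HasDerivAt (fun s ↦ (s * t) ^ θ 2) (θ 2 * (θ 1 * t) ^ θ 2 / θ 1) (θ 1) := by
      convert! hlin.rpow_const (p := θ 2) (.inl hz.ne') using 1
      rw [Real.rpow_sub_one hz.ne']
      field_simp
    have hW : HasDerivAt (fun s ↦ θ 3 * tanFactor (θ 2) * rpowSlope (θ 2) (s * t))
        (θ 3 * tanFactor (θ 2) * (rpowSlope (θ 2) (θ 1 * t) + (θ 1 * t) ^ θ 2) / θ 1) (θ 1) := by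
      convert! ((hasDerivAt_rpowSlope_right hz (θ 2)).comp (θ 1) hlin).const_mul
        (θ 3 * tanFactor (θ 2)) using 1
      field_simp
    simpa [psiDeriv] using (hpow.neg.ofReal_comp.sub (hW.ofReal_comp.mul_const I)).add_const
      ((θ 0 * t : ℝ) * I)
  · have hpow := (Real.hasStrictDerivAt_const_rpow hz (θ 2)).hasDerivAt
    have hW := ((hasDerivAt_tanFactor hθ.2.1).mul
      (hasDerivAt_rpowSlope_left (θ 2) (θ 1 * t))).const_mul (θ 3)
    simpa [psiDeriv, mul_assoc] using (hpow.neg.ofReal_comp.sub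
      (hW.ofReal_comp.mul_const I)).add_const ((θ 0 * t : ℝ) * I)
  · have hW := (hasDerivAt_id (θ 3)).mul_const (tanFactor (θ 2) * rpowSlope (θ 2) (θ 1 * t))
    simpa [psiDeriv, mul_assoc] using ((hW.ofReal_comp.mul_const I).const_sub
      (-((θ 1 * t) ^ θ 2 : ℝ) : ℂ)).add_const ((θ 0 * t : ℝ) * I)

end ParameterDerivatives

section HalfLineRepresentation

variable {θ : Fin 4 → ℝ} {γ : ℝ}

theorem integral_eq_two_mul_re_setIntegral_Ioi {g : ℝ → ℂ} (hg : Integrable g)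
    (hconj : ∀ t, g (-t) = (starRingEnd ℂ) (g t)) :
    ∫ t, g t = (2 * (∫ t in Ioi 0, g t).re : ℝ) := by
  rw [integral_eq_setIntegral_Ioi_add_comp_neg hg.integrableOn hg.comp_neg.integrableOn]
  simp_rw [hconj]
  rw [integral_conj, Complex.add_conj]

theorem conj_exp_neg_I_mul_mul (t x : ℝ) :
    (starRingEnd ℂ) (Complex.exp (-I * t * x)) = Complex.exp (-I * (-t : ℝ) * x) := by
  rw [← Complex.exp_conj]
  simp

theorem phiM_neg (θ : Fin 4 → ℝ) (t : ℝ) : phiM θ (-t) = (starRingEnd ℂ) (phiM θ t) := by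
  rw [phiM, phiM, psiM_neg, Complex.exp_conj]

theorem fM_eq_re_setIntegral_Ioi (hθ : θ ∈ ThetaInt) (x : ℝ) :
    fM θ x = 1 / π * (∫ t in Ioi 0, phiM θ t * Complex.exp (-I * t * x)).re := by
  have h := integral_eq_two_mul_re_setIntegral_Ioi
    (integrable_mul_exp_neg_I (integrable_phiM hθ) x) fun t ↦ by
      rw [phiM_neg, map_mul, conj_exp_neg_I_mul_mul]
  simp only [fM, mul_comm (Complex.exp _), h, Complex.ofReal_re]
  ring

theorem EulerBounded.comp_mul_left_growthWeight {F : ℝ → ℂ} {n : ℕ} {σ : ℝ}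
    (hF : EulerBounded (growthWeight γ) n F) (hσ : 0 < σ) :
    EulerBounded (growthWeight γ) n fun t ↦ F (σ * t) :=
  (hF.comp_mul_left hσ).mono (growthWeight_comp_mul_isBigO hσ)

theorem eulerBounded_ofReal (hγ₁ : -1 < γ) (hγ₂ : γ < 1) (n : ℕ) :
    EulerBounded (growthWeight γ) n fun t ↦ (t : ℂ) :=
  (EulerBounded.rpow_mul_log_pow hγ₂ (show 1 < γ + 2 by linarith) 0 n).congr fun t _ ↦ by simp

theorem eulerBounded_psiM (hθ : θ ∈ ThetaInt) (hγ₀ : 0 < γ) (hγ₁ : γ < 1) (hγα : γ < θ 2) (n : ℕ) :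
    EulerBounded (growthWeight γ) n (psiM θ) := by
  have hα : θ 2 < γ + 2 := by linarith [hθ.2.1.2]
  have hpow := (EulerBounded.rpow_mul_log_pow hγα hα 0 n).comp_mul_left_growthWeight hθ.1
  have hW := (EulerBounded.ofReal_rpowSlope (by linarith) hγ₁ hγα hα n).comp_mul_left_growthWeight
    hθ.1
  have hlin := eulerBounded_ofReal (by linarith) hγ₁ n
  refine (((hpow.const_mul (-1)).add (hW.const_mul (-(θ 3 * tanFactor (θ 2) : ℝ) * I))).add
    (hlin.const_mul (θ 0 * I))).congr fun t ht ↦ ?_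
  rw [psiM_of_pos hθ ht]
  push_cast
  ring

theorem eulerBounded_psiDeriv (hθ : θ ∈ ThetaInt) (hγ₀ : 0 < γ) (hγ₁ : γ < 1) (hγα : γ < θ 2)
    (n : ℕ) (i : Fin 4) : EulerBounded (growthWeight γ) n fun t ↦ psiDeriv θ t i := by
  have hα : θ 2 < γ + 2 := by linarith [hθ.2.1.2]
  have hγ₂ : -1 < γ := by linarith
  have hpow := (EulerBounded.rpow_mul_log_pow hγα hα 0 n).comp_mul_left_growthWeight hθ.1
  have hlog := (EulerBounded.rpow_mul_log_pow hγα hα 1 n).comp_mul_left_growthWeight hθ.1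
  have hW := (EulerBounded.ofReal_rpowSlope hγ₂ hγ₁ hγα hα n).comp_mul_left_growthWeight hθ.1
  have hW' := (EulerBounded.ofReal_rpowSlopeDeriv hγ₂ hγ₁ hγα hα n).comp_mul_left_growthWeight
    hθ.1
  set T := tanFactor (θ 2)
  fin_cases i
  · exact ((eulerBounded_ofReal hγ₂ hγ₁ n).const_mul I).congr fun t _ ↦ by simp [psiDeriv, mul_comm]
  · refine ((hpow.const_mul (-(θ 2 / θ 1))).add
      ((hW.add hpow).const_mul (-(θ 3 * T / θ 1) * I))).congr fun t _ ↦ ?_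
    simp [psiDeriv, T]
    ring
  · refine ((hlog.const_mul (-1)).add (((hW.const_mul (deriv tanFactor (θ 2) : ℝ)).add
      (hW'.const_mul T)).const_mul (-θ 3 * I))).congr fun t _ ↦ ?_
    simp [psiDeriv, T]
    ring
  · refine (hW.const_mul (-T * I)).congr fun t _ ↦ ?_
    simp [psiDeriv, T]
    ring

theorem eulerBounded_phiM_mul_psiDeriv (hθ : θ ∈ ThetaInt) (hγ₀ : 0 < γ) (hγ₁ : γ < 1)
    (hγα : γ < θ 2) (n : ℕ) (i : Fin 4) :
    EulerBounded (decayWeight γ) n fun t ↦ phiM θ t * psiDeriv θ t i :=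
  (eulerBounded_psiM hθ hγ₀ hγ₁ hγα n).cexp_mul hγ₀.le hγ₁.le hθ.1 hθ.2.1.1
    (eulerBounded_psiDeriv hθ hγ₀ hγ₁ hγα n i) fun t ht ↦ by
      rw [psiM_re, abs_of_pos (mul_pos hθ.1 ht)]

theorem norm_neg_ofReal_sub_ofReal_mul_I_le (a b : ℝ) : ‖-(a : ℂ) - b * I‖ ≤ |a| + |b| := by
  simpa using norm_sub_le (-(a : ℂ)) (b * I)

theorem norm_psiDeriv_one_le (hθ : θ ∈ ThetaInt) {t : ℝ} (ht : 0 < t) :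
    ‖psiDeriv θ t 1‖ ≤
      2 * (θ 1)⁻¹ * (1 + |tanFactor (θ 2)|) * rpowLogMajorant (θ 2) (θ 1 * t) := by
  have hz : 0 < θ 1 * t := mul_pos hθ.1 ht
  have hβ : |θ 3| ≤ 1 := (abs_lt.2 hθ.2.2).le
  have hα : |θ 2| ≤ 2 := abs_le.2 ⟨by linarith [hθ.2.1.1], hθ.2.1.2.le⟩
  have hpow := abs_rpow_le_rpowLogMajorant hz (θ 2)
  have hsum := (abs_add_le _ _).trans (add_le_add (abs_rpowSlope_le_rpowLogMajorant hz (θ 2)) hpow)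
  refine (norm_neg_ofReal_sub_ofReal_mul_I_le _ _).trans ?_
  rw [abs_div, abs_div, abs_mul, abs_mul, abs_mul, abs_of_pos hθ.1, div_eq_mul_inv, div_eq_mul_inv]
  calc _ ≤ 2 * rpowLogMajorant (θ 2) (θ 1 * t) * (θ 1)⁻¹ + 1 * |tanFactor (θ 2)| *
        (rpowLogMajorant (θ 2) (θ 1 * t) + rpowLogMajorant (θ 2) (θ 1 * t)) * (θ 1)⁻¹ := by
        have := hθ.1
        gcongr
    _ = _ := by ring

theorem norm_psiDeriv_two_le (hθ : θ ∈ ThetaInt) {t : ℝ} (ht : 0 < t) :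
    ‖psiDeriv θ t 2‖ ≤ (1 + |tanFactor (θ 2)| + |deriv tanFactor (θ 2)|) *
      rpowLogMajorant (θ 2) (θ 1 * t) := by
  have hz : 0 < θ 1 * t := mul_pos hθ.1 ht
  have hβ : |θ 3| ≤ 1 := (abs_lt.2 hθ.2.2).le
  refine (norm_neg_ofReal_sub_ofReal_mul_I_le _ _).trans ?_
  rw [abs_mul (θ 3)]
  calc _ ≤ rpowLogMajorant (θ 2) (θ 1 * t) + 1 *
        (|deriv tanFactor (θ 2)| * rpowLogMajorant (θ 2) (θ 1 * t) +
          |tanFactor (θ 2)| * rpowLogMajorant (θ 2) (θ 1 * t)) := by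
        gcongr
        · exact abs_rpow_mul_log_le_rpowLogMajorant hz _
        · refine (abs_add_le _ _).trans ?_
          rw [abs_mul, abs_mul]
          gcongr
          · exact abs_rpowSlope_le_rpowLogMajorant hz _
          · exact abs_rpowSlopeDeriv_le_rpowLogMajorant hz _
    _ = _ := by ring

theorem norm_psiDeriv_le (hθ : θ ∈ ThetaInt) {t : ℝ} (ht : 0 < t) (i : Fin 4) :
    ‖psiDeriv θ t i‖ ≤ 2 * (1 + (θ 1)⁻¹) * (1 + |tanFactor (θ 2)| + |deriv tanFactor (θ 2)|) *
      rpowLogMajorant (θ 2) (θ 1 * t) := by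
  have hz : 0 < θ 1 * t := mul_pos hθ.1 ht
  have hσ : 0 < (θ 1)⁻¹ := inv_pos.2 hθ.1
  have hM := abs_rpowSlope_le_rpowLogMajorant hz (θ 2)
  have hM₀ := (abs_nonneg _).trans hM
  have hT := abs_nonneg (tanFactor (θ 2))
  have hT' := abs_nonneg (deriv tanFactor (θ 2))
  suffices h : ∃ b, b ≤ 2 * (1 + (θ 1)⁻¹) * (1 + |tanFactor (θ 2)| + |deriv tanFactor (θ 2)|) ∧
      ‖psiDeriv θ t i‖ ≤ b * rpowLogMajorant (θ 2) (θ 1 * t) by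
    obtain ⟨b, hb, hle⟩ := h
    exact hle.trans (by gcongr)
  fin_cases i
  · refine ⟨(θ 1)⁻¹, by nlinarith [mul_nonneg hσ.le hT, mul_nonneg hσ.le hT'], ?_⟩
    have ht' : ‖psiDeriv θ t 0‖ = (θ 1)⁻¹ * (θ 1 * t) := by
      simp [psiDeriv, hθ.1.ne', abs_of_pos ht]
    exact ht'.trans_le (by gcongr; exact le_rpowLogMajorant hz _)
  · exact ⟨_, by nlinarith [mul_nonneg hσ.le hT, mul_nonneg hσ.le hT'], norm_psiDeriv_one_le hθ ht⟩
  · exact ⟨_, by nlinarith [mul_nonneg hσ.le hT, mul_nonneg hσ.le hT'], norm_psiDeriv_two_le hθ ht⟩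
  · refine ⟨|tanFactor (θ 2)|, by nlinarith [mul_nonneg hσ.le hT, mul_nonneg hσ.le hT'], ?_⟩
    have hnorm : ‖psiDeriv θ t 3‖ = |tanFactor (θ 2)| * |rpowSlope (θ 2) (θ 1 * t)| := by
      simp [psiDeriv]
    exact hnorm.trans_le (by gcongr)

end HalfLineRepresentation

section DifferentiationUnderTheIntegral

variable {θ : Fin 4 → ℝ} {γ : ℝ}

theorem rpow_le_rpow_add_rpow {s a a₁ a₂ : ℝ} (hs : 0 < s) (ha : a ∈ Icc a₁ a₂) :
    s ^ a ≤ s ^ a₁ + s ^ a₂ := by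
  rcases le_total s 1 with h | h
  · exact (Real.rpow_le_rpow_of_exponent_ge hs h ha.1).trans
      (le_add_of_nonneg_right (by positivity))
  · exact (Real.rpow_le_rpow_of_exponent_le h ha.2).trans (le_add_of_nonneg_left (by positivity))

theorem rpow_sub_one_le_rpow {s s' a a' : ℝ} (hs : 0 ≤ s) (hss' : s ≤ s') (ha : 0 ≤ a)
    (haa' : a ≤ a') : s ^ a - 1 ≤ s' ^ a' := by
  rcases le_total s 1 with h | h
  · exact (sub_nonpos.2 (Real.rpow_le_one hs h ha)).trans (Real.rpow_nonneg (hs.trans hss') _)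
  · calc s ^ a - 1 ≤ s ^ a' :=
          (sub_le_self _ zero_le_one).trans (Real.rpow_le_rpow_of_exponent_le h haa')
      _ ≤ s' ^ a' := Real.rpow_le_rpow hs hss' (ha.trans haa')

theorem growthWeight_le_growthWeight {s t : ℝ} (hγ : 0 ≤ γ) (hs : 0 ≤ s) (hst : s ≤ t) :
    growthWeight γ s ≤ growthWeight γ t := by
  have ht := hs.trans hst
  unfold growthWeight
  gcongr

theorem exists_rpowLogMajorant_le_growthWeight {a₁ a₂ : ℝ} (hγ₁ : -1 < γ) (hγ₂ : γ < 1)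
    (ha₁ : γ < a₁) (ha : a₁ ≤ a₂) (ha₂ : a₂ < γ + 2) :
    ∃ C, 0 ≤ C ∧ ∀ a ∈ Icc a₁ a₂, ∀ s > 0, rpowLogMajorant a s ≤ C * growthWeight γ s := by
  obtain ⟨C, hC₀, hC⟩ := exists_norm_le_of_isBigO_principal_Ioi
    (((rpow_mul_one_add_abs_log_pow_isBigO_growthWeight hγ₂ (by linarith) 2).add
      (rpow_mul_one_add_abs_log_pow_isBigO_growthWeight ha₁ (by linarith) 2)).add
      (rpow_mul_one_add_abs_log_pow_isBigO_growthWeight (ha₁.trans_le ha) ha₂ 2))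
    fun s hs ↦ growthWeight_nonneg γ hs
  refine ⟨C, hC₀, fun a haI s hs ↦ ?_⟩
  calc rpowLogMajorant a s ≤ (s ^ (1 : ℝ) + (s ^ a₁ + s ^ a₂)) * (1 + |Real.log s|) ^ 2 := by
        rw [rpowLogMajorant, Real.rpow_one]
        gcongr
        exact rpow_le_rpow_add_rpow hs haI
    _ ≤ C * growthWeight γ s := by
        simpa only [add_mul, add_assoc] using (le_abs_self _).trans (hC s hs)

theorem eventually_norm_psiDeriv_le (hθ : θ ∈ ThetaInt) (hγ₀ : 0 < γ) (hγ₁ : γ < 1)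
    (hγα : γ < θ 2) :
    ∃ C, 0 ≤ C ∧ ∀ᶠ θ' in 𝓝 θ, ∀ i, ∀ t > 0, ‖psiDeriv θ' t i‖ ≤ C * growthWeight γ t := by
  have hσ : 0 < θ 1 := hθ.1
  have hα : θ 2 < 2 := hθ.2.1.2
  obtain ⟨a₁, hγa₁, ha₁⟩ := exists_between hγα
  obtain ⟨K, hK⟩ := eventually_abs_tanFactor_le hθ.2.1
  obtain ⟨C₁, hC₁₀, hC₁⟩ := exists_rpowLogMajorant_le_growthWeight (by linarith) hγ₁ hγa₁
    (ha₁.trans hα).le (show 2 < γ + 2 by linarith)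
  obtain ⟨C₂, hC₂₀, hC₂⟩ := exists_norm_le_of_isBigO_principal_Ioi
    (growthWeight_comp_mul_isBigO (γ := γ) (show 0 < 2 * θ 1 by linarith))
    fun t ht ↦ growthWeight_nonneg γ ht
  have hK₀ : 0 ≤ K := (abs_nonneg _).trans hK.self_of_nhds.1
  refine ⟨2 * (1 + (θ 1 / 2)⁻¹) * (1 + K + K) * (C₁ * C₂), by positivity, ?_⟩
  have hcont (i : Fin 4) : ContinuousAt (fun θ' : Fin 4 → ℝ ↦ θ' i) θ :=
    (continuous_apply i).continuousAt
  filter_upwards [isOpen_ThetaInt.mem_nhds hθ, (hcont 2).eventually hK,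
    (hcont 1).eventually_const_lt (half_lt_self hσ),
    (hcont 1).eventually_lt_const (show θ 1 < 2 * θ 1 by linarith),
    (hcont 2).eventually_const_lt ha₁] with θ' hθ' hK' hσ₁ hσ₂ hα₁ i t ht
  have hz : 0 < θ' 1 * t := mul_pos hθ'.1 ht
  have hmajorant : rpowLogMajorant (θ' 2) (θ' 1 * t) ≤ C₁ * C₂ * growthWeight γ t :=
    calc _ ≤ C₁ * growthWeight γ (θ' 1 * t) := hC₁ _ ⟨hα₁.le, hθ'.2.1.2.le⟩ _ hz
      _ ≤ C₁ * growthWeight γ (2 * θ 1 * t) := by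
          gcongr
          exact growthWeight_le_growthWeight hγ₀.le hz.le (by gcongr)
      _ ≤ C₁ * (C₂ * growthWeight γ t) := by
          gcongr
          exact (le_abs_self _).trans (hC₂ t ht)
      _ = _ := by ring
  calc _ ≤ _ := norm_psiDeriv_le hθ' ht i
    _ ≤ 2 * (1 + (θ 1 / 2)⁻¹) * (1 + K + K) * (C₁ * C₂ * growthWeight γ t) := by
        have := (le_rpowLogMajorant hz (θ' 2)).trans' hz.le
        gcongr
        exacts [hK'.1, hK'.2]
    _ = _ := by ring

theorem eventually_norm_phiM_le {a : ℝ} (hθ : θ ∈ ThetaInt) (ha₀ : 0 ≤ a) (ha : a < θ 2) :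
    ∀ᶠ θ' in 𝓝 θ, ∀ t > 0, ‖phiM θ' t‖ ≤ Real.exp 1 * Real.exp (-(θ 1 / 2 * t) ^ a) := by
  have hσ : 0 < θ 1 := hθ.1
  have hcont (i : Fin 4) : ContinuousAt (fun θ' : Fin 4 → ℝ ↦ θ' i) θ :=
    (continuous_apply i).continuousAt
  filter_upwards [(hcont 1).eventually_const_lt (half_lt_self hσ),
    (hcont 2).eventually_const_lt ha] with θ' hσ' hα' t ht
  have hle : θ 1 / 2 * t ≤ |θ' 1 * t| := (le_abs_self _).trans' (by gcongr)
  rw [norm_phiM, ← Real.exp_add, Real.exp_le_exp]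
  linarith [rpow_sub_one_le_rpow (by positivity) hle ha₀ hα'.le]

theorem eventually_norm_phiM_mul_psiDeriv_le (hθ : θ ∈ ThetaInt) (hγ₀ : 0 < γ) (hγ₁ : γ < 1)
    (hγα : γ < θ 2) :
    ∃ C, ∀ᶠ θ' in 𝓝 θ, ∀ i, ∀ t > 0, ‖phiM θ' t * psiDeriv θ' t i‖ ≤ C * decayWeight γ t := by
  obtain ⟨C₁, hC₁₀, hC₁⟩ := eventually_norm_psiDeriv_le hθ hγ₀ hγ₁ hγα
  obtain ⟨C₂, -, hC₂⟩ := exists_norm_le_of_isBigO_principal_Ioi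
    (exp_mul_one_add_pow_mul_growthWeight_isBigO_decayWeight (γ := γ) (half_pos hθ.1) hγ₀ 0)
    fun t ht ↦ decayWeight_nonneg γ ht
  refine ⟨Real.exp 1 * C₁ * C₂, ?_⟩
  filter_upwards [hC₁, eventually_norm_phiM_le hθ hγ₀.le hγα] with θ' hψ hφ i t ht
  have hdecay := (le_abs_self _).trans (hC₂ t ht)
  rw [pow_zero, mul_one] at hdecay
  calc ‖phiM θ' t * psiDeriv θ' t i‖
      ≤ Real.exp 1 * Real.exp (-(θ 1 / 2 * t) ^ γ) * (C₁ * growthWeight γ t) := by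
        rw [norm_mul]
        gcongr
        exacts [hφ t ht, hψ i t ht]
    _ = Real.exp 1 * C₁ * (Real.exp (-(θ 1 / 2 * t) ^ γ) * growthWeight γ t) := by ring
    _ ≤ Real.exp 1 * C₁ * (C₂ * decayWeight γ t) := by gcongr
    _ = _ := by ring

theorem hasDerivAt_phiM_update (hθ : θ ∈ ThetaInt) {t : ℝ} (ht : 0 < t) (i : Fin 4) :
    HasDerivAt (fun s ↦ phiM (Function.update θ i s) t) (phiM θ t * psiDeriv θ t i) (θ i) := by
  simpa [phiM] using (hasDerivAt_psiM_update hθ ht i).cexp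

theorem exists_half_lt_lt_one_lt (hθ : θ ∈ ThetaInt) :
    ∃ γ, θ 2 / 2 < γ ∧ 0 < γ ∧ γ < 1 ∧ γ < θ 2 := by
  obtain ⟨hα₀, hα₂⟩ := hθ.2.1
  obtain ⟨γ, hγ, hγ'⟩ := exists_between (show θ 2 / 2 < min 1 (θ 2) from
    lt_min (by linarith) (by linarith))
  exact ⟨γ, hγ, by linarith, lt_min_iff.1 hγ'⟩

theorem continuousOn_phiM_mul_psiDeriv (hθ : θ ∈ ThetaInt) (i : Fin 4) :
    ContinuousOn (fun t ↦ phiM θ t * psiDeriv θ t i) (Ioi 0) := by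
  obtain ⟨γ, -, hγ₀, hγ₁, hγα⟩ := exists_half_lt_lt_one_lt hθ
  exact (eulerBounded_phiM_mul_psiDeriv hθ hγ₀ hγ₁ hγα 1 i).continuousOn

theorem integrableOn_phiM_mul_psiDeriv (hθ : θ ∈ ThetaInt) (i : Fin 4) :
    IntegrableOn (fun t ↦ phiM θ t * psiDeriv θ t i) (Ioi 0) := by
  obtain ⟨γ, -, hγ₀, hγ₁, hγα⟩ := exists_half_lt_lt_one_lt hθ
  exact integrableOn_of_isBigO_decayWeight (by linarith) hγ₁
    (eulerBounded_phiM_mul_psiDeriv hθ hγ₀ hγ₁ hγα 0 i).isBigO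
    (continuousOn_phiM_mul_psiDeriv hθ i)

theorem hasDerivAt_fM_update (hθ : θ ∈ ThetaInt) (i : Fin 4) (x : ℝ) :
    HasDerivAt (fun s ↦ fM (Function.update θ i s) x)
      (1 / π * (∫ t in Ioi 0, phiM θ t * psiDeriv θ t i * Complex.exp (-I * t * x)).re) (θ i) := by
  obtain ⟨γ, -, hγ₀, hγ₁, hγα⟩ := exists_half_lt_lt_one_lt hθ
  obtain ⟨C, hC⟩ := eventually_norm_phiM_mul_psiDeriv_le hθ hγ₀ hγ₁ hγα
  have hnhds := eventually_update (hC.and (isOpen_ThetaInt.mem_nhds hθ)) i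
  have hmem := eventually_update (isOpen_ThetaInt.mem_nhds hθ) i
  have hint {θ' : Fin 4 → ℝ} (hθ' : θ' ∈ ThetaInt) :
      Integrable (fun t ↦ phiM θ' t * Complex.exp (-I * t * x)) (volume.restrict (Ioi 0)) :=
    integrable_mul_exp_neg_I (integrable_phiM hθ').integrableOn x
  have hderiv := (hasDerivAt_integral_of_dominated_loc_of_deriv_le
    (μ := volume.restrict (Ioi 0)) (𝕜 := ℝ) (bound := fun t ↦ C * decayWeight γ t)
    (F := fun s t ↦ phiM (Function.update θ i s) t * Complex.exp (-I * t * x))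
    (F' := fun s t ↦ phiM (Function.update θ i s) t * psiDeriv (Function.update θ i s) t i *
      Complex.exp (-I * t * x)) hnhds (hmem.mono fun s hs ↦ (hint hs).aestronglyMeasurable)
    (by simpa using hint hθ)
    (by simpa using (integrable_mul_exp_neg_I (integrableOn_phiM_mul_psiDeriv hθ i)
      x).aestronglyMeasurable)
    ((ae_restrict_iff' measurableSet_Ioi).2 (.of_forall fun t ht s hs ↦ ?_))
    ((integrableOn_decayWeight (by linarith) hγ₁).const_mul C)
    ((ae_restrict_iff' measurableSet_Ioi).2 (.of_forall fun t ht s hs ↦ ?_))).2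
  · have hre := (Complex.reCLM.hasFDerivAt.comp_hasDerivAt _ hderiv).const_mul (1 / π)
    simp only [Function.update_eq_self] at hre
    exact hre.congr_of_eventuallyEq (hmem.mono fun s hs ↦ fM_eq_re_setIntegral_Ioi hs x)
  · rw [norm_mul, norm_exp_neg_I_mul_mul, mul_one]
    exact hs.1 i t ht
  · simpa using (hasDerivAt_phiM_update hs.2 ht i).mul_const (Complex.exp (-I * t * x))

theorem fP_eq_re_setIntegral_Ioi (hθ : θ ∈ ThetaInt) (i : Fin 4) (x : ℝ) :
    fP i θ x =
      1 / π * (∫ t in Ioi 0, phiM θ t * psiDeriv θ t i * Complex.exp (-I * t * x)).re :=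
  (hasDerivAt_fM_update hθ i x).deriv

end DifferentiationUnderTheIntegral

section FourierUniqueness

variable {h k : ℝ → ℂ} {t : ℝ}

theorem eq_zero_of_integral_mul_exp_neg_I_eq_zero (hk : Integrable k) (hkt : ContinuousAt k t)
    (hzero : ∀ x : ℝ, ∫ s, k s * Complex.exp (-I * s * x) = 0) : k t = 0 := by
  have hfourier : FourierTransform.fourier k = 0 := by
    funext w
    rw [Real.fourier_real_eq_integral_exp_smul, Pi.zero_apply, ← hzero (2 * π * w)]
    congr 1 with s
    rw [smul_eq_mul, mul_comm]
    congr 2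
    push_cast
    ring
  have hinv := hk.fourierInv_fourier_eq (by rw [hfourier]; exact integrable_zero _ _ _) hkt
  rw [← hinv, hfourier, Real.fourierInv_eq']
  simp

/-- The function `k` on the line which agrees with `h` on `(0, ∞)` and satisfies
`k (-t) = conj (k t)`, so that its Fourier transform is real. -/
noncomputable def hermitianExtension (h : ℝ → ℂ) (t : ℝ) : ℂ :=
  (Ioi 0).indicator h t + (starRingEnd ℂ) ((Ioi 0).indicator h (-t))

theorem hermitianExtension_neg (h : ℝ → ℂ) (t : ℝ) :
    hermitianExtension h (-t) = (starRingEnd ℂ) (hermitianExtension h t) := by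
  simp only [hermitianExtension, map_add, Complex.conj_conj, neg_neg, add_comm]

theorem hermitianExtension_of_pos (h : ℝ → ℂ) (ht : 0 < t) : hermitianExtension h t = h t := by
  simp [hermitianExtension, ht, ht.le]

theorem integrable_hermitianExtension (hh : IntegrableOn h (Ioi 0)) :
    Integrable (hermitianExtension h) := by
  have hind := (integrable_indicator_iff measurableSet_Ioi).2 hh
  exact hind.add (Complex.conjLIE.integrable_comp_iff.2 hind.comp_neg)

theorem eq_zero_of_re_setIntegral_Ioi_mul_exp_neg_I_eq_zero (hint : IntegrableOn h (Ioi 0))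
    (hcont : ContinuousOn h (Ioi 0))
    (hzero : ∀ x : ℝ, (∫ s in Ioi 0, h s * Complex.exp (-I * s * x)).re = 0) (ht : 0 < t) :
    h t = 0 := by
  have hk := integrable_hermitianExtension hint
  have heq : hermitianExtension h =ᶠ[𝓝 t] h :=
    (lt_mem_nhds ht).mono fun s hs ↦ hermitianExtension_of_pos h hs
  have hkt : ContinuousAt (hermitianExtension h) t :=
    (hcont.continuousAt (Ioi_mem_nhds ht)).congr heq.symm
  rw [← heq.eq_of_nhds]
  refine eq_zero_of_integral_mul_exp_neg_I_eq_zero hk hkt fun x ↦ ?_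
  rw [integral_eq_two_mul_re_setIntegral_Ioi (integrable_mul_exp_neg_I hk x) fun s ↦ by
      rw [hermitianExtension_neg, map_mul, conj_exp_neg_I_mul_mul],
    setIntegral_congr_fun measurableSet_Ioi fun s hs ↦ by
      rw [hermitianExtension_of_pos h hs], hzero, mul_zero, Complex.ofReal_zero]

end FourierUniqueness

section LinearIndependence

variable {θ : Fin 4 → ℝ}

theorem re_sum_smul_psiDeriv (θ v : Fin 4 → ℝ) (t : ℝ) :
    (∑ i, v i • psiDeriv θ t i).re =
      -(v 1 * (θ 2 * (θ 1 * t) ^ θ 2 / θ 1) + v 2 * ((θ 1 * t) ^ θ 2 * Real.log (θ 1 * t))) := by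
  simp [Fin.sum_univ_four, psiDeriv, -Complex.ofReal_mul, -Complex.ofReal_div]
  ring

theorem im_sum_smul_psiDeriv (θ v : Fin 4 → ℝ) (t : ℝ) :
    (∑ i, v i • psiDeriv θ t i).im = v 0 * t -
      v 1 * (θ 3 * tanFactor (θ 2) * (rpowSlope (θ 2) (θ 1 * t) + (θ 1 * t) ^ θ 2) / θ 1) -
      v 2 * (θ 3 * (deriv tanFactor (θ 2) * rpowSlope (θ 2) (θ 1 * t) +
        tanFactor (θ 2) * rpowSlopeDeriv (θ 2) (θ 1 * t))) -
      v 3 * (tanFactor (θ 2) * rpowSlope (θ 2) (θ 1 * t)) := by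
  simp [Fin.sum_univ_four, psiDeriv, -Complex.ofReal_mul, -Complex.ofReal_div]
  ring

-- The points `θ 1 * t = 1` and `θ 1 * t = e` suffice: at the first, `log` and `rpowSlope` vanish.
theorem linearIndependent_psiDeriv (hθ : θ ∈ ThetaInt) :
    LinearIndependent ℝ fun (i : Fin 4) (t : Ioi (0 : ℝ)) ↦ psiDeriv θ t i := by
  have hσ : 0 < θ 1 := hθ.1
  have hα : 0 < θ 2 := hθ.2.1.1
  refine Fintype.linearIndependent_iff.2 fun v hv ↦ ?_
  have hzero {z : ℝ} (hz : 0 < z) : ∑ i, v i • psiDeriv θ (z / θ 1) i = 0 := by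
    simpa using congrFun hv ⟨z / θ 1, div_pos hz hσ⟩
  have hre {z : ℝ} (hz : 0 < z) := congrArg Complex.re (hzero hz)
  have him {z : ℝ} (hz : 0 < z) := congrArg Complex.im (hzero hz)
  simp only [re_sum_smul_psiDeriv, im_sum_smul_psiDeriv, mul_div_cancel₀ _ hσ.ne',
    Complex.zero_re, Complex.zero_im] at hre him
  have hv₁ : v 1 = 0 := by
    simpa [hσ.ne', hα.ne'] using hre one_pos
  have hv₂ : v 2 = 0 := by
    simpa [hv₁, (Real.rpow_pos_of_pos (Real.exp_pos 1) _).ne'] using hre (Real.exp_pos 1)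
  have hv₀ : v 0 = 0 := by
    simpa [hv₁, hv₂, rpowSlope, hσ.ne'] using him one_pos
  have hv₃ : v 3 = 0 := by
    simpa [hv₀, hv₁, hv₂, rpowSlope, tanFactor_ne_zero hθ.2.1, expSlope_ne_zero] using
      him (Real.exp_pos 1)
  exact Fin.forall_fin_succ.2 ⟨hv₀, by simp [Fin.forall_fin_succ, hv₁, hv₂, hv₃]⟩

theorem sum_smul_fP (hθ : θ ∈ ThetaInt) (v : Fin 4 → ℝ) (x : ℝ) :
    ∑ i, v i * fP i θ x = 1 / π * (∫ t in Ioi 0, phiM θ t * (∑ i, v i • psiDeriv θ t i) *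
      Complex.exp (-I * t * x)).re := by
  have hint (i : Fin 4) := (integrable_mul_exp_neg_I
    (integrableOn_phiM_mul_psiDeriv hθ i) x).fun_smul (v i)
  have hexpand (t : ℝ) : phiM θ t * (∑ i, v i • psiDeriv θ t i) * Complex.exp (-I * t * x) =
      ∑ i, v i • (phiM θ t * psiDeriv θ t i * Complex.exp (-I * t * x)) := by
    simp_rw [Finset.mul_sum, Finset.sum_mul, mul_smul_comm, smul_mul_assoc]
  simp_rw [hexpand]
  rw [integral_finsetSum _ fun i _ ↦ hint i, Complex.re_sum, Finset.mul_sum]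
  refine Finset.sum_congr rfl fun i _ ↦ ?_
  rw [integral_smul, Complex.smul_re, smul_eq_mul, fP_eq_re_setIntegral_Ioi hθ]
  ring

theorem linearIndependent_fP (hθ : θ ∈ ThetaInt) : LinearIndependent ℝ fun i ↦ fP i θ := by
  refine Fintype.linearIndependent_iff.2 fun v hv ↦ ?_
  refine Fintype.linearIndependent_iff.1 (linearIndependent_psiDeriv hθ) v (funext fun t ↦ ?_)
  have hint : IntegrableOn (fun t ↦ phiM θ t * ∑ i, v i • psiDeriv θ t i) (Ioi 0) := by
    simp_rw [Finset.mul_sum, mul_smul_comm]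
    exact integrable_finsetSum _ fun i _ ↦ (integrableOn_phiM_mul_psiDeriv hθ i).smul (v i)
  have hcont : ContinuousOn (fun t ↦ phiM θ t * ∑ i, v i • psiDeriv θ t i) (Ioi 0) := by
    simp_rw [Finset.mul_sum, mul_smul_comm]
    exact continuousOn_finsetSum _ fun i _ ↦ (continuousOn_phiM_mul_psiDeriv hθ i).const_smul (v i)
  have hzero := eq_zero_of_re_setIntegral_Ioi_mul_exp_neg_I_eq_zero hint hcont (fun x ↦ ?_) t.2
  · simpa [phiM, Complex.exp_ne_zero] using hzero
  · have hvx : ∑ i, v i * fP i θ x = 0 := by simpa using congrFun hv x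
    simpa [sum_smul_fP hθ, Real.pi_ne_zero] using hvx

end LinearIndependence

section FisherInformation

theorem posDef_of_integral_mul_div {ι X : Type*} [Finite ι] [TopologicalSpace X]
    [MeasurableSpace X] {μ : Measure X} [μ.IsOpenPosMeasure] {f : X → ℝ} {g : ι → X → ℝ}
    (hg : ∀ i, Continuous (g i)) (hf : Continuous f) (hpos : ∀ x, 0 < f x)
    (hint : ∀ i j, Integrable (fun x ↦ g i x * g j x / f x) μ) (hli : LinearIndependent ℝ g) :
    (Matrix.of fun i j ↦ ∫ x, g i x * g j x / f x ∂μ).PosDef := by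
  cases nonempty_fintype ι
  refine Matrix.PosDef.of_dotProduct_mulVec_pos ?_ fun v hv ↦ ?_
  · ext i j
    simp only [Matrix.conjTranspose_apply, Matrix.of_apply, star_trivial, mul_comm]
  set G : X → ℝ := fun x ↦ ∑ i, v i * g i x with hG
  have hexpand (x : X) : G x ^ 2 / f x = ∑ i, ∑ j, v i * (v j * (g i x * g j x / f x)) := by
    simp_rw [hG, sq, Finset.sum_mul_sum, Finset.sum_div]
    exact Finset.sum_congr rfl fun i _ ↦ Finset.sum_congr rfl fun j _ ↦ by ring
  have hterm (i j : ι) := ((hint i j).const_mul (v j)).const_mul (v i)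
  have hquad : star v ⬝ᵥ (Matrix.of fun i j ↦ ∫ x, g i x * g j x / f x ∂μ).mulVec v =
      ∫ x, G x ^ 2 / f x ∂μ := by
    simp_rw [hexpand]
    rw [integral_finsetSum _ fun i _ ↦ integrable_finsetSum _ fun j _ ↦ hterm i j]
    simp only [dotProduct, Matrix.mulVec, star_trivial, Matrix.of_apply, Finset.mul_sum]
    refine Finset.sum_congr rfl fun i _ ↦ ?_
    simp_rw [integral_finsetSum _ fun j _ ↦ hterm i j, integral_const_mul, mul_comm]
  have hG_int : Integrable (fun x ↦ G x ^ 2 / f x) μ := by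
    simp_rw [hexpand]
    exact integrable_finsetSum _ fun i _ ↦ integrable_finsetSum _ fun j _ ↦ hterm i j
  have hG_cont : Continuous fun x ↦ G x ^ 2 / f x :=
    ((continuous_finsetSum _ fun i _ ↦ (hg i).const_mul (v i)).pow 2).div hf fun x ↦ (hpos x).ne'
  have hG_nonneg : 0 ≤ fun x ↦ G x ^ 2 / f x := fun x ↦ div_nonneg (sq_nonneg _) (hpos x).le
  obtain ⟨x, hx⟩ : ∃ x, G x ≠ 0 := by
    by_contra! hzero
    refine hv (funext (Fintype.linearIndependent_iff.1 hli v (funext fun x ↦ ?_)))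
    simpa using hzero x
  rw [hquad]
  exact integral_pos_of_integrable_nonneg_nonzero hG_cont hG_int hG_nonneg
    (x := x) (div_ne_zero (pow_ne_zero 2 hx) (hpos x).ne')

variable {θ : Fin 4 → ℝ}

theorem continuous_integral_mul_exp_neg_I {μ : Measure ℝ} {F : ℝ → ℂ} (hF : Integrable F μ) :
    Continuous fun x : ℝ ↦ ∫ t, F t * Complex.exp (-I * t * x) ∂μ := by
  refine continuous_of_dominated (bound := fun t ↦ ‖F t‖)
    (fun x ↦ (integrable_mul_exp_neg_I hF x).aestronglyMeasurable)
    (fun x ↦ .of_forall fun t ↦ ?_) hF.norm (.of_forall fun t ↦ by fun_prop)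
  rw [norm_mul, norm_exp_neg_I_mul_mul, mul_one]

theorem continuous_fM (hθ : θ ∈ ThetaInt) : Continuous (fM θ) := by
  rw [funext (fM_eq_re_setIntegral_Ioi hθ)]
  have := continuous_integral_mul_exp_neg_I ((integrable_phiM hθ).integrableOn (s := Ioi 0))
  fun_prop

theorem continuous_fP (hθ : θ ∈ ThetaInt) (i : Fin 4) : Continuous (fP i θ) := by
  rw [funext (fP_eq_re_setIntegral_Ioi hθ i)]
  have := continuous_integral_mul_exp_neg_I (integrableOn_phiM_mul_psiDeriv hθ i)
  fun_prop

theorem fM_pos (hθ : θ ∈ ThetaInt) (x : ℝ) : 0 < fM θ x := by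
  obtain ⟨C, hC, hle⟩ := exists_rpow_le_fM hθ
  exact (by positivity : 0 < C * (1 + |x|) ^ (-1 - θ 2)).trans_le (hle x)

theorem exists_abs_fP_le {γ : ℝ} (hθ : θ ∈ ThetaInt) (hγ₀ : 0 < γ) (hγ₁ : γ < 1) (hγα : γ < θ 2)
    (i : Fin 4) : ∃ K, 0 ≤ K ∧ ∀ x, |fP i θ x| ≤ K * (1 + |x|) ^ (-1 - γ) := by
  obtain ⟨K, hK₀, hK⟩ := (eulerBounded_phiM_mul_psiDeriv hθ hγ₀ hγ₁ hγα 2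
    i).exists_norm_setIntegral_le hγ₀ hγ₁
  refine ⟨1 / π * K, by positivity, fun x ↦ ?_⟩
  rw [fP_eq_re_setIntegral_Ioi hθ, abs_mul, abs_of_pos (by positivity), mul_assoc]
  gcongr
  exact (Complex.abs_re_le_norm _).trans (hK x)

theorem integrable_fP_mul_fP_div_fM (hθ : θ ∈ ThetaInt) (i j : Fin 4) :
    Integrable fun x ↦ fP i θ x * fP j θ x / fM θ x := by
  obtain ⟨γ, hγ, hγ₀, hγ₁, hγα⟩ := exists_half_lt_lt_one_lt hθ
  obtain ⟨Ki, hKi₀, hKi⟩ := exists_abs_fP_le hθ hγ₀ hγ₁ hγα i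
  obtain ⟨Kj, hKj₀, hKj⟩ := exists_abs_fP_le hθ hγ₀ hγ₁ hγα j
  obtain ⟨C, hC, hle⟩ := exists_rpow_le_fM hθ
  have hcont : Continuous fun x ↦ fP i θ x * fP j θ x / fM θ x :=
    ((continuous_fP hθ i).mul (continuous_fP hθ j)).div (continuous_fM hθ) fun x ↦ (fM_pos hθ x).ne'
  refine ((integrable_one_add_abs_rpow (r := -1 - (2 * γ - θ 2)) (by linarith)).const_mul
    (Ki * Kj / C)).mono' hcont.aestronglyMeasurable (.of_forall fun x ↦ ?_)
  have hx : 0 < 1 + |x| := by positivity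
  rw [Real.norm_eq_abs, abs_div, abs_mul, abs_of_pos (fM_pos hθ x)]
  calc |fP i θ x| * |fP j θ x| / fM θ x
      ≤ Ki * (1 + |x|) ^ (-1 - γ) * (Kj * (1 + |x|) ^ (-1 - γ)) / (C * (1 + |x|) ^ (-1 - θ 2)) := by
        gcongr
        exacts [hKi x, hKj x, hle x]
    _ = Ki * Kj / C * ((1 + |x|) ^ (-1 - γ) * (1 + |x|) ^ (-1 - γ) / (1 + |x|) ^ (-1 - θ 2)) := by
        ring
    _ = Ki * Kj / C * (1 + |x|) ^ (-1 - (2 * γ - θ 2)) := by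
        rw [← Real.rpow_add hx, ← Real.rpow_sub hx]
        ring_nf

end FisherInformation

/-- For every `θ ∈ Θ_M°` the Fisher information matrix is positive
definite; in particular it is nonsingular. -/
theorem fisher_posDef :
    ∀ θ ∈ ThetaInt, (FisherInfo θ).PosDef ∧ (FisherInfo θ).det ≠ 0 := by
  intro θ hθ
  suffices hpd : (FisherInfo θ).PosDef from ⟨hpd, hpd.det_pos.ne'⟩
  exact posDef_of_integral_mul_div (continuous_fP hθ) (continuous_fM hθ) (fM_pos hθ)
    (integrable_fP_mul_fP_div_fM hθ) (linearIndependent_fP hθ)
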